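/- Let p be a prime, let K be an algebraic closure of the field with p elements, let Y be an integral scheme of finite type over K, and let f : Y → Y be a dominant morphism of schemes over K, i.e. the set-theoretic image of f is dense in the underlying topological space of Y. Then the set of f-periodic closed points, namely {y ∈ Y : y is a closed point and f^b(y) = y for some integer b ≥ 1, where f^b denotes the b-fold iterate of the underlying map of f}, is dense in the underlying topological space of Y. -/

import Mathlib

/-!
Suppose that `φ` is an injective endomorphism of a finitely generated `𝔽_p`-domain `A` and that
every periodic orbit on `Spec A` meets the zero set of some `D ≠ 0`. The points at which the `b`-th
iterate agrees with the `q ^ b`-power map are cut out by the ideal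
`I_{b,q} = (φ ^ b a - a ^ (q ^ b))`, so the Nullstellensatz, made uniform in `q` by Kronecker's
substitution, yields for each `b` some `E_b ≠ 0` lying in `I_{b,q}` for all large `q = p ^ j`.

On the other hand, let `C` be a nonzero `p⁻¹`-linear operator on `A` and put
`T_h v = C ^ j (h * φ v)`. These operators contract the filtration of `A` by degree, so that they
and their products have a trace. Moving `a` cyclically once around a word of `b` such operators
turns `φ ^ b a` into `a ^ (q ^ b)`, so the trace of the word vanishes as soon as one of its
coefficients lies in `I_{b,q}`. But given `E ≠ 0` and `j` large, for a suitable step `V` of the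
filtration and every `v ≠ 0` in `V`, the vectors `T_{E g} v` span more than half of `V`, and
Jacobson density then produces a word in these operators with nonzero trace. Its length is bounded
by some `B` independent of `E` and `j`, and `E = ∏ b ≤ B, E_b` gives a contradiction.

Finitely many data over `K` descend to a finitely generated `𝔽_p`-algebra, and an endomorphism that
is not injective becomes so on the image of a high iterate. Finally, a scheme covered by affine
open sets `U i` is replaced by the affine variety with function ring generated by `t i` and
`t i * x`, for `x` among the generators of the functions on `U i`, where `∑ i, t i = 1`. It fibres
over the scheme in affine spaces, which makes the self-map lift.
-/

open AlgebraicGeometry CategoryTheory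

universe u

section Trace

variable {k A : Type*} [Field k] [Ring A] [Algebra k A]

section Simple

variable {N : Type*} [AddCommGroup N] [Module k N] [Module A N] [IsScalarTower k A N]
  [IsSimpleModule A N]

/- By Jacobson density `A` contains, modulo the annihilator of `N`, every rank one map
`w ↦ ℓ w • c • v`, and composing it with `x` gives an operator of trace `Tr(c)`, where
`Tr : End A N → k` is the trace form of a finite field. -/
theorem exists_trace_lsmul_ne_zero_of_isSimpleModule [Finite k]
    [FiniteDimensional k N] {I : Ideal A} {x : A} (hx : x ∈ I)
    {v : N} (hxv : x • v ≠ 0) :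
    ∃ a ∈ I, LinearMap.trace k N (Algebra.lsmul k k N a) ≠ 0 := by
  classical
  have : Finite N := Module.finite_of_finite k
  let D := Module.End A N
  have : Finite D := DFunLike.finite _
  let : Field D := littleWedderburn _
  have : IsScalarTower k D N := ⟨fun _ _ _ ↦ rfl⟩
  have : Module.Finite k D := Module.Finite.of_finite
  have : Module.Finite D N := Module.Finite.of_finite
  obtain ⟨c, hc⟩ := Algebra.trace_surjective k D 1
  obtain ⟨ℓ, hℓ⟩ := Module.Projective.exists_dual_eq_one D hxv
  obtain ⟨r, hr⟩ := Module.Finite.toModuleEnd_moduleEnd_surjective (R := A) (ℓ.smulRight (c v))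
  let g : N →ₗ[k] D := ℓ.restrictScalars k ∘ₗ Algebra.lsmul k k N x
  let h : D →ₗ[k] N := (LinearMap.toSpanSingleton D N (c v)).restrictScalars k
  have hrx : Algebra.lsmul k k N (r * x) = h ∘ₗ g := by
    ext w
    rw [map_mul]
    exact congr($hr (x • w))
  have hgh : g ∘ₗ h = Algebra.lmul k D c := by
    ext1 d
    calc ℓ (x • d (c v)) = ℓ ((d * c) • x • v) :=
        (congrArg ℓ (LinearMap.map_smul (d * c) x v)).symm
      _ = c * d := by rw [map_smul, hℓ, smul_eq_mul, mul_one, mul_comm]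
  refine ⟨r * x, I.mul_mem_left r hx, ?_⟩
  rw [hrx, LinearMap.trace_comp_comm', hgh]
  exact hc.trans_ne one_ne_zero

/- If `L` is a minimal left ideal with `L • N ≠ 0`, then every `u : M` with `L • u ≠ 0` embeds a
quotient of `L` that surjects onto `N`. -/
theorem finrank_le_of_annihilator_le [FiniteDimensional k A]
    {M : Type*} [AddCommGroup M] [Module k M] [Module A M] [IsScalarTower k A M]
    [FiniteDimensional k M] (h : Module.annihilator A M ≤ Module.annihilator A N) :
    Module.finrank k N ≤ Module.finrank k M := by
  have : IsArtinianRing A := .of_finite k A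
  have := IsSimpleModule.nontrivial A N
  obtain ⟨L, hL, hmin⟩ := exists_minimal_of_wellFoundedLT
    (fun L : Ideal A ↦ ¬ L ≤ Module.annihilator A N) ⟨⊤, by
      rw [top_le_iff, Module.annihilator_eq_top_iff]; exact not_subsingleton N⟩
  obtain ⟨a, haL, ha⟩ := SetLike.not_le_iff_exists.mp hL
  obtain ⟨n, hn⟩ : ∃ n : N, a • n ≠ 0 := by simpa [Module.mem_annihilator] using ha
  obtain ⟨u, hu⟩ : ∃ u : M, a • u ≠ 0 := by simpa [Module.mem_annihilator] using mt (@h a) ha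
  let f : L →ₗ[A] M := (LinearMap.toSpanSingleton A M u).domRestrict L
  let g : L →ₗ[A] N := (LinearMap.toSpanSingleton A N n).domRestrict L
  have hL' : L ⊓ LinearMap.ker (LinearMap.toSpanSingleton A M u) ≤ Module.annihilator A N := by
    by_contra hL'
    exact hu (hmin hL' inf_le_left haL).2
  have hker : LinearMap.ker (f.restrictScalars k) ≤ LinearMap.ker (g.restrictScalars k) :=
    fun b hb ↦ Module.mem_annihilator.mp (hL' ⟨b.2, hb⟩) n
  have hg : LinearMap.range (g.restrictScalars k) = ⊤ :=
    LinearMap.range_eq_top.mpr (LinearMap.surjective_of_ne_zero (f := g)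
      fun h0 ↦ hn congr($h0 ⟨a, haL⟩))
  have hfr := (f.restrictScalars k).finrank_range_add_finrank_ker
  have hgr := (g.restrictScalars k).finrank_range_add_finrank_ker
  rw [hg, finrank_top] at hgr
  have := (LinearMap.range (f.restrictScalars k)).finrank_le
  have := Submodule.finrank_mono hker
  lia

end Simple

theorem exists_trace_lsmul_ne_zero [Finite k] [FiniteDimensional k A]
    {V : Type*} [AddCommGroup V] [Module k V] [Module A V] [IsScalarTower k A V]
    [FiniteDimensional k V] (W : Submodule A V) [IsSimpleModule A W]
    (hW : Module.finrank k V < 2 * Module.finrank k W) {I : Ideal A} {x : A} (hx : x ∈ I)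
    {v : V} (hv : v ∈ W) (hxv : x • v ≠ 0) :
    ∃ a ∈ I, LinearMap.trace k V (Algebra.lsmul k k V a) ≠ 0 := by
  have : FiniteDimensional k W := inferInstanceAs (FiniteDimensional k (W.restrictScalars k))
  have hquot : Module.finrank k (V ⧸ W) < Module.finrank k W := by
    have := (W.restrictScalars k).finrank_quotient_add_finrank
    rw [(Submodule.Quotient.restrictScalarsEquiv k W).finrank_eq] at this
    change _ + Module.finrank k W = _ at this
    lia
  obtain ⟨b, hbV, hbW⟩ := SetLike.not_le_iff_exists.mp
    (mt (finrank_le_of_annihilator_le (k := k) (A := A) (N := W) (M := V ⧸ W)) hquot.not_ge)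
  obtain ⟨w, hw⟩ : ∃ w : W, b • w ≠ 0 := by simpa [Module.mem_annihilator] using hbW
  obtain ⟨r, rfl⟩ := IsSimpleModule.toSpanSingleton_surjective A
    (m := (⟨x • v, W.smul_mem x hv⟩ : W)) (by simpa using hxv) w
  obtain ⟨a, ha, htr⟩ := exists_trace_lsmul_ne_zero_of_isSimpleModule (k := k)
    (I := I ⊓ Module.annihilator A (V ⧸ W)) (x := b * r * x) (v := (⟨v, hv⟩ : W))
    ⟨I.mul_mem_left _ hx, by rw [mul_assoc]; exact Ideal.mul_mem_right _ _ hbV⟩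
    (by simpa [mul_smul] using hw)
  have haW (u : V) : a • u ∈ W := by
    have := Module.mem_annihilator.mp ha.2 (W.mkQ u)
    rwa [← map_smul, W.mkQ_apply, Submodule.Quotient.mk_eq_zero] at this
  refine ⟨a, ha.1, ?_⟩
  rwa [← LinearMap.trace_restrict_eq_of_forall_mem (p := W.restrictScalars k)
    (Algebra.lsmul k k V a) haW]

theorem trace_eq_zero_of_mem_span_adjoin {V : Type*} [AddCommGroup V] [Module k V]
    {S : Set (Module.End k V)}
    (h : ∀ m ∈ Submonoid.closure S, ∀ s ∈ S, LinearMap.trace k V (m * s) = 0)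
    {a : Algebra.adjoin k S} (ha : a ∈ Ideal.span {t : Algebra.adjoin k S | t.1 ∈ S}) :
    LinearMap.trace k V a = 0 := by
  suffices ∀ c : Algebra.adjoin k S, LinearMap.trace k V (c * a : Algebra.adjoin k S) = 0 by
    simpa using this 1
  induction ha using Submodule.span_induction with
  | mem s hs =>
    intro c
    have hle : Submodule.span k (Submonoid.closure S : Set (Module.End k V)) ≤
        LinearMap.ker (LinearMap.trace k V ∘ₗ LinearMap.mulRight k s.1) :=
      Submodule.span_le.mpr fun m hm ↦ h m hm s hs
    exact hle (Algebra.adjoin_eq_span k S ▸ c.2)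
  | zero => simp
  | add a b _ _ iha ihb =>
    exact fun c ↦ by rw [mul_add, Subalgebra.coe_add, map_add, iha, ihb, add_zero]
  | smul r a _ ih => exact fun c ↦ by simpa [mul_assoc] using ih (c * r)

/- The monoid generated by `S` spans an algebra, each of whose minimal nonzero invariant subspaces
is more than half of `V`. -/
theorem exists_trace_mul_ne_zero [Finite k] {V : Type*} [AddCommGroup V] [Module k V]
    [FiniteDimensional k V] [Nontrivial V] {S : Set (Module.End k V)}
    (hS : ∀ v ≠ 0, Module.finrank k V < 2 * Module.finrank k (Submodule.span k ((· v) '' S))) :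
    ∃ m ∈ Submonoid.closure S, ∃ s ∈ S, LinearMap.trace k V (m * s) ≠ 0 := by
  by_contra! hzero
  let A := Algebra.adjoin k S
  have : IsArtinian A V := isArtinian_of_tower k inferInstance
  obtain ⟨W, hW⟩ := IsAtomic.exists_atom (Submodule A V)
  have := isSimpleModule_iff_isAtom.mpr hW
  obtain ⟨v, hvW, hv⟩ := W.exists_mem_ne_zero_of_ne_bot hW.1
  have hdim : Module.finrank k V < 2 * Module.finrank k W := by
    refine (hS v hv).trans_le (Nat.mul_le_mul_left 2 ?_)
    refine Submodule.finrank_mono (t := W.restrictScalars k) (Submodule.span_le.mpr ?_)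
    rintro _ ⟨s, hs, rfl⟩
    exact W.smul_mem (⟨s, Algebra.subset_adjoin hs⟩ : A) hvW
  obtain ⟨s, hs, hsv⟩ : ∃ s ∈ S, s v ≠ 0 := by
    by_contra! h0
    have := hS v hv
    rw [Submodule.span_eq_bot.mpr (by simpa using h0)] at this
    simp at this
  obtain ⟨a, ha, hne⟩ :=
    exists_trace_lsmul_ne_zero W hdim (x := (⟨s, Algebra.subset_adjoin hs⟩ : A))
    (Ideal.subset_span (s := {t : A | t.1 ∈ S}) hs) hvW hsv
  exact hne (trace_eq_zero_of_mem_span_adjoin hzero ha)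

theorem exists_length_bound_trace_prod_ne_zero (k V : Type*) [Field k] [Finite k] [AddCommGroup V]
    [Module k V] [FiniteDimensional k V] [Nontrivial V] :
    ∃ B, ∀ S : Set (Module.End k V),
      (∀ v ≠ 0, Module.finrank k V < 2 * Module.finrank k (Submodule.span k ((· v) '' S))) →
      ∃ l : List (Module.End k V), l ≠ [] ∧ l.length ≤ B ∧ (∀ s ∈ l, s ∈ S) ∧
        LinearMap.trace k V l.prod ≠ 0 := by
  have : Finite (Module.End k V) := Module.finite_of_finite k
  have hword (S : Set (Module.End k V)) : ∃ N,
      (∀ v ≠ 0, Module.finrank k V < 2 * Module.finrank k (Submodule.span k ((· v) '' S))) →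
      ∃ l : List (Module.End k V), l ≠ [] ∧ l.length ≤ N ∧ (∀ s ∈ l, s ∈ S) ∧
        LinearMap.trace k V l.prod ≠ 0 := by
    by_contra! h
    obtain ⟨m, hm, s, hs, htr⟩ := exists_trace_mul_ne_zero (h 0).1
    obtain ⟨l, hl, rfl⟩ := Submonoid.exists_list_of_mem_closure hm
    have hls : ∀ t ∈ l ++ [s], t ∈ S := by simpa [or_imp, forall_and] using ⟨hl, hs⟩
    exact htr (by simpa using (h (l.length + 1)).2 (l ++ [s]) (by simp) (by simp) hls)
  choose N hN using hword
  obtain ⟨B, hB⟩ := Finite.exists_le N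
  refine ⟨B, fun S hS ↦ ?_⟩
  obtain ⟨l, hne, hlen, hl⟩ := hN S hS
  exact ⟨l, hne, hlen.trans (hB S), hl⟩

end Trace

section Compression

variable {k A : Type*} [Field k] [AddCommGroup A] [Module k A]

/-- The compression of an operator to a subspace `W`, by means of a chosen projection onto `W`. -/
noncomputable def compression (W : Submodule k A) : Module.End k A →ₗ[k] Module.End k W :=
  (LinearMap.compRight k W.subtype.leftInverse).comp (LinearMap.lcomp k A W.subtype)

/-- The trace of the compression to `W`; linear in the operator, which need not preserve `W`. -/
noncomputable def traceOn (W : Submodule k A) : Module.End k A →ₗ[k] k :=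
  LinearMap.trace k W ∘ₗ compression W

theorem coe_compression_apply {W : Submodule k A} {T : Module.End k A} {w : W} (h : T w ∈ W) :
    (compression W T w : A) = T w :=
  congrArg Subtype.val (LinearMap.leftInverse_apply_of_inj (by simp) (⟨T w, h⟩ : W))

theorem compression_eq_restrict {W : Submodule k A} {T : Module.End k A} (h : W ≤ W.comap T) :
    compression W T = T.restrict h :=
  LinearMap.ext fun w ↦ Subtype.ext (coe_compression_apply (h w.2))

theorem compression_list_prod {W : Submodule k A} {l : List (Module.End k A)}
    (hl : ∀ T ∈ l, W ≤ W.comap T) : compression W l.prod = (l.map (compression W)).prod := by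
  suffices ∀ w : W, (((l.map (compression W)).prod w : W) : A) = l.prod w from
    LinearMap.ext fun w ↦ Subtype.ext <| by
      rw [this, coe_compression_apply (this w ▸ Subtype.coe_prop _)]
  intro w
  induction l with
  | nil => simp
  | cons T l ih =>
    rw [List.forall_mem_cons] at hl
    simp only [List.map_cons, List.prod_cons, Module.End.mul_apply, ← ih hl.2]
    exact coe_compression_apply (hl.1 (Subtype.coe_prop _))

theorem traceOn_mul_comm {W U : Submodule k A} [FiniteDimensional k U] [FiniteDimensional k W]
    {T m : Module.End k A} (hT : U ≤ W.comap T) (hm : W ≤ U.comap m) :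
    traceOn W (T * m) = traceOn U (m * T) := by
  have hW : compression W (T * m) = T.restrict hT ∘ₗ m.restrict hm :=
    compression_eq_restrict fun w hw ↦ @hT (m w) (hm hw)
  have hU : compression U (m * T) = m.restrict hm ∘ₗ T.restrict hT :=
    compression_eq_restrict fun w hw ↦ @hm (T w) (hT hw)
  exact (congrArg _ hW).trans ((LinearMap.trace_comp_comm' _ _).trans (congrArg _ hU).symm)

theorem traceOn_eq_of_le {W U : Submodule k A} [FiniteDimensional k W] [FiniteDimensional k U]
    {T : Module.End k A} (hWU : W ≤ U) (h : U ≤ W.comap T) : traceOn U T = traceOn W T := by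
  simpa using (traceOn_mul_comm (m := 1) h hWU).symm

theorem exists_length_bound_traceOn_ne_zero [Finite k] (W : Submodule k A) [FiniteDimensional k W]
    [Nontrivial W] :
    ∃ B, ∀ S : Set (Module.End k A), (∀ T ∈ S, W ≤ W.comap T) →
      (∀ v ∈ W, v ≠ 0 →
        Module.finrank k W < 2 * Module.finrank k (Submodule.span k ((· v) '' S))) →
      ∃ l : List (Module.End k A), l ≠ [] ∧ l.length ≤ B ∧ (∀ T ∈ l, T ∈ S) ∧
        traceOn W l.prod ≠ 0 := by
  obtain ⟨B, hB⟩ := exists_length_bound_trace_prod_ne_zero k W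
  refine ⟨B, fun S hSW hS ↦ ?_⟩
  have hspan (v : W) : Module.finrank k (Submodule.span k ((· v) '' (compression W '' S))) =
      Module.finrank k (Submodule.span k ((· (v : A)) '' S)) := by
    have himage : W.subtype '' ((· v) '' (compression W '' S)) = (· (v : A)) '' S := by
      simp only [Set.image_image]
      exact Set.image_congr fun T hT ↦ coe_compression_apply (hSW T hT v.2)
    rw [← himage, ← Submodule.map_span]
    exact (W.equivSubtypeMap _).finrank_eq
  obtain ⟨l, hne, hlen, hl, htr⟩ := hB (compression W '' S) fun v hv ↦
    (hS v v.2 (by simpa using hv)).trans_eq (by rw [hspan])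
  obtain ⟨l, rfl⟩ : l ∈ Set.range (List.map (S.domRestrict (compression W))) := by
    rw [Set.range_list_map, Set.range_domRestrict]
    exact hl
  have hmem : ∀ T ∈ l.map (↑), T ∈ S := by simp +contextual
  refine ⟨l.map (↑), by simpa using hne, by simpa using hlen, hmem, ?_⟩
  rwa [traceOn, LinearMap.comp_apply, compression_list_prod fun T hT ↦ hSW T (hmem T hT),
    List.map_map]

end Compression

section Contracting

open Filter

variable {k A : Type*} [Field k] [AddCommGroup A] [Module k A] (F : ℕ →o Submodule k A)

/-- An operator which lowers the degree for the filtration `F` by any prescribed amount,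
in large degrees. -/
def IsContracting (T : Module.End k A) : Prop :=
  ∀ d, ∀ᶠ N in atTop, F (N + d) ≤ (F N).comap T

variable {F}

theorem IsContracting.mul {T₁ T₂ : Module.End k A} (h₁ : IsContracting F T₁)
    (h₂ : IsContracting F T₂) : IsContracting F (T₁ * T₂) := by
  intro d
  filter_upwards [h₁ 0, h₂ d] with N hN₁ hN₂ x hx
  exact hN₁ (hN₂ hx)

theorem IsContracting.list_prod {l : List (Module.End k A)} (hne : l ≠ [])
    (h : ∀ T ∈ l, IsContracting F T) : IsContracting F l.prod :=
  l.prod_induction_nonempty _ (fun _ _ ↦ IsContracting.mul) hne h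

theorem IsContracting.mul_left {T m : Module.End k A} (hT : IsContracting F T) {d : ℕ}
    (hm : ∀ N, F N ≤ (F (N + d)).comap m) : IsContracting F (m * T) := by
  intro e
  filter_upwards [(tendsto_sub_atTop_nat d).eventually (hT (d + e)), eventually_ge_atTop d]
    with N hN hdN
  rw [← Nat.add_assoc, Nat.sub_add_cancel hdN] at hN
  have hmN := hm (N - d)
  rw [Nat.sub_add_cancel hdN] at hmN
  exact hN.trans (Submodule.comap_mono hmN)

theorem IsContracting.eventually_traceOn_mul_comm [∀ N, FiniteDimensional k (F N)]
    {T m : Module.End k A} (hT : IsContracting F T) {d : ℕ}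
    (hm : ∀ N, F N ≤ (F (N + d)).comap m) :
    ∀ᶠ N in atTop, traceOn (F N) (T * m) = traceOn (F N) (m * T) := by
  filter_upwards [hT d, hT.mul_left hm d] with N hN hmTN
  rw [traceOn_mul_comm hN (hm N), traceOn_eq_of_le (F.mono (N.le_add_right d)) hmTN]

theorem traceOn_eq_of_lowering [∀ N, FiniteDimensional k (F N)] {T : Module.End k A} {r : ℕ}
    (hT : ∀ N ≥ r, F (N + 1) ≤ (F N).comap T) {N : ℕ} (hN : r ≤ N) :
    traceOn (F N) T = traceOn (F r) T := by
  induction N, hN using Nat.le_induction with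
  | base => rfl
  | succ N hN ih => rw [← ih, traceOn_eq_of_le (F.mono N.le_succ) (hT N hN)]

end Contracting

theorem exists_add_lt_two_mul_of_le_pow {f : ℕ → ℕ} {s : ℕ} (hpos : 0 < f 0)
    (hf : ∀ N, f N ≤ (N + 1) ^ s) (d : ℕ) : ∃ N, f (N + d) < 2 * f N := by
  by_contra! h
  have hexp (m : ℕ) : 2 ^ m ≤ f (m * d) := by
    induction m with
    | zero => simpa [Nat.one_le_iff_ne_zero, Nat.pos_iff_ne_zero] using hpos
    | succ m ih =>
      calc 2 ^ (m + 1) = 2 * 2 ^ m := pow_succ' ..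
        _ ≤ 2 * f (m * d) := by gcongr
        _ ≤ f (m * d + d) := h _
        _ = f ((m + 1) * d) := by rw [Nat.succ_mul]
  have hpoly (m : ℕ) (hm : 1 ≤ m) : 2 ^ m ≤ (d + 1) ^ s * m ^ s :=
    calc 2 ^ m ≤ (m * d + 1) ^ s := (hexp m).trans (hf _)
      _ ≤ ((d + 1) * m) ^ s := Nat.pow_le_pow_left (by nlinarith) s
      _ = (d + 1) ^ s * m ^ s := mul_pow ..
  have hlim := tendsto_pow_const_div_const_pow_of_one_lt s (r := 2) (by norm_num)
  have hpos : 0 < 1 / (d + 1 : ℝ) ^ s := by positivity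
  obtain ⟨m, hm, hm1⟩ :=
    ((hlim.eventually (gt_mem_nhds hpos)).and (Filter.eventually_ge_atTop 1)).exists
  rw [div_lt_div_iff₀ (by positivity) (by positivity)] at hm
  have : (2 : ℝ) ^ m ≤ (d + 1) ^ s * m ^ s := mod_cast hpoly m hm1
  linarith

section DegreeFiltration

open MvPolynomial

variable {σ k A : Type*} [Field k] [CommRing A] [Algebra k A] (π : MvPolynomial σ k →ₐ[k] A)

/-- The filtration of `A` by the images of the polynomials of total degree at most `N`
under a presentation `π`. -/
noncomputable def degreeFiltration : ℕ →o Submodule k A where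
  toFun N := (restrictTotalDegree σ k N).map π.toLinearMap
  monotone' _ _ h := Submodule.map_mono fun P hP ↦ by
    rw [mem_restrictTotalDegree] at hP ⊢
    exact hP.trans h

instance [Finite σ] (N : ℕ) : FiniteDimensional k (degreeFiltration π N) :=
  inferInstanceAs (FiniteDimensional k ((restrictTotalDegree σ k N).map π.toLinearMap))

variable {π} {M N : ℕ} {a b : A}

theorem mem_degreeFiltration : a ∈ degreeFiltration π N ↔ ∃ P, P.totalDegree ≤ N ∧ π P = a := by
  change a ∈ Submodule.map _ _ ↔ _
  simp only [Submodule.mem_map, mem_restrictTotalDegree, AlgHom.toLinearMap_apply]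

theorem map_mem_degreeFiltration {P : MvPolynomial σ k} (hP : P.totalDegree ≤ N) :
    π P ∈ degreeFiltration π N :=
  mem_degreeFiltration.mpr ⟨P, hP, rfl⟩

theorem monomial_mem_degreeFiltration {α : σ →₀ ℕ} (hα : α.degree ≤ N) :
    π (monomial α 1) ∈ degreeFiltration π N :=
  map_mem_degreeFiltration ((totalDegree_monomial_le α 1).trans hα)

theorem one_mem_degreeFiltration : 1 ∈ degreeFiltration π N :=
  mem_degreeFiltration.mpr ⟨1, by simp⟩

instance [Nontrivial A] : Nontrivial (degreeFiltration π N) :=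
  nontrivial_of_ne ⟨1, one_mem_degreeFiltration⟩ 0 fun h ↦ one_ne_zero (congrArg Subtype.val h)

theorem mul_mem_degreeFiltration (ha : a ∈ degreeFiltration π M) (hb : b ∈ degreeFiltration π N) :
    a * b ∈ degreeFiltration π (M + N) := by
  obtain ⟨P, hP, rfl⟩ := mem_degreeFiltration.mp ha
  obtain ⟨Q, hQ, rfl⟩ := mem_degreeFiltration.mp hb
  rw [← map_mul]
  exact map_mem_degreeFiltration ((totalDegree_mul P Q).trans (by gcongr))

theorem pow_mem_degreeFiltration (ha : a ∈ degreeFiltration π N) (n : ℕ) :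
    a ^ n ∈ degreeFiltration π (n * N) := by
  obtain ⟨P, hP, rfl⟩ := mem_degreeFiltration.mp ha
  rw [← map_pow]
  exact map_mem_degreeFiltration ((totalDegree_pow P n).trans (by gcongr))

theorem degreeFiltration_eq_span (N : ℕ) :
    degreeFiltration π N = Submodule.span k ((fun α ↦ π (monomial α 1)) '' {α | α.degree ≤ N}) := by
  change Submodule.map _ (restrictSupport k {α | α.degree ≤ N}) = _
  rw [restrictSupport_eq_span, Submodule.map_span, Set.image_image]
  rfl

theorem finrank_degreeFiltration_le [Fintype σ] (N : ℕ) :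
    Module.finrank k (degreeFiltration π N) ≤ (N + 1) ^ Fintype.card σ := by
  classical
  have hle : degreeFiltration π N ≤ Submodule.span k
      (Set.range fun α : σ → Fin (N + 1) ↦
        π (monomial (Finsupp.equivFunOnFinite.symm (α ·)) 1)) := by
    rw [degreeFiltration_eq_span]
    refine Submodule.span_mono ?_
    rintro _ ⟨α, hα, rfl⟩
    exact ⟨fun i ↦ ⟨α i, Nat.lt_succ_of_le ((Finsupp.le_degree i α).trans hα)⟩,
      congrArg (fun β ↦ π (monomial β 1)) (Finsupp.ext fun _ ↦ rfl)⟩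
  have := FiniteDimensional.span_of_finite k (Set.finite_range
    fun α : σ → Fin (N + 1) ↦ π (monomial (Finsupp.equivFunOnFinite.symm (α ·)) 1))
  calc Module.finrank k (degreeFiltration π N) ≤ _ := Submodule.finrank_mono hle
    _ ≤ Fintype.card (σ → Fin (N + 1)) := finrank_range_le_card _
    _ = (N + 1) ^ Fintype.card σ := by simp

theorem exists_le_degreeFiltration (hπ : Function.Surjective π) {W : Submodule k A} (hW : W.FG) :
    ∃ N, W ≤ degreeFiltration π N := by
  have htop : ⨆ N, degreeFiltration π N = ⊤ := by
    refine eq_top_iff.mpr fun a _ ↦ ?_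
    obtain ⟨P, rfl⟩ := hπ a
    exact Submodule.mem_iSup_of_mem _ (map_mem_degreeFiltration le_rfl)
  obtain ⟨_, ⟨N, rfl⟩, hN⟩ := (Submodule.fg_iff_compact W).mp hW _ _ (Set.range_nonempty _)
    (degreeFiltration π).monotone.directed_le.directedOn_range (isLUB_iSup) (htop ▸ le_top)
  exact ⟨N, hN⟩

theorem exists_mem_degreeFiltration (hπ : Function.Surjective π) (a : A) :
    ∃ N, a ∈ degreeFiltration π N := by
  simpa using exists_le_degreeFiltration hπ (Submodule.fg_span_singleton a)

/- Divide the exponents of a monomial by `q` with remainder. -/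
theorem degreeFiltration_le_span [Fintype σ] {q : ℕ} (hq : 0 < q) (M : ℕ) :
    degreeFiltration π M ≤ Submodule.span k (Set.image2 (fun b r ↦ b ^ q * r)
      (degreeFiltration π (M / q)) (degreeFiltration π (Fintype.card σ * q))) := by
  rw [degreeFiltration_eq_span M, Submodule.span_le]
  rintro _ ⟨α, hα, rfl⟩
  let β : σ →₀ ℕ := α.mapRange (· / q) (Nat.zero_div q)
  let ρ : σ →₀ ℕ := α.mapRange (· % q) (Nat.zero_mod q)
  have hα' : α = q • β + ρ := Finsupp.ext fun i ↦ (Nat.div_add_mod (α i) q).symm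
  refine Submodule.subset_span ⟨π (monomial β 1), ?_, π (monomial ρ 1), ?_, ?_⟩
  · refine monomial_mem_degreeFiltration ((Nat.le_div_iff_mul_le hq).mpr (le_trans ?_ hα))
    rw [hα']
    simp [mul_comm]
  · refine monomial_mem_degreeFiltration ?_
    rw [Finsupp.degree_eq_sum]
    calc ∑ i, ρ i ≤ ∑ _ : σ, q := Finset.sum_le_sum fun i _ ↦ (Nat.mod_lt (α i) hq).le
      _ = Fintype.card σ * q := by simp
  · conv_rhs => rw [hα']
    simp [← map_pow, ← map_mul, monomial_pow, monomial_mul]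

theorem exists_degreeFiltration_le_comap (φ : A →ₐ[k] A) [Finite σ] (hπ : Function.Surjective π) :
    ∃ δ, ∀ N, degreeFiltration π N ≤ (degreeFiltration π (δ * N)).comap φ.toLinearMap := by
  obtain ⟨δ, hδ⟩ := exists_le_degreeFiltration hπ
    ((Submodule.FG.of_finite (N := degreeFiltration π 1)).map φ.toLinearMap)
  have hmonomial (α : σ →₀ ℕ) : φ (π (monomial α 1)) ∈ degreeFiltration π (δ * α.degree) := by
    induction α using Finsupp.induction_linear with
    | zero => simpa using one_mem_degreeFiltration
    | add α β hα hβ =>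
      rw [map_add, mul_add, ← one_mul 1, ← monomial_mul, map_mul, map_mul]
      exact mul_mem_degreeFiltration hα hβ
    | single i n =>
      rw [← X_pow_eq_monomial, map_pow, map_pow, Finsupp.degree_single, mul_comm]
      exact pow_mem_degreeFiltration
        (hδ (Submodule.mem_map_of_mem (monomial_mem_degreeFiltration (by simp)))) n
  refine ⟨δ, fun N ↦ ?_⟩
  rw [degreeFiltration_eq_span N, Submodule.span_le]
  rintro _ ⟨α, hα, rfl⟩
  exact (degreeFiltration π).mono (by gcongr; exact hα) (hmonomial α)

end DegreeFiltration

theorem exists_finrank_degreeFiltration_add_lt {σ k A : Type*} [Finite σ] [Field k] [CommRing A]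
    [Nontrivial A] [Algebra k A] (π : MvPolynomial σ k →ₐ[k] A) (d : ℕ) :
    ∃ L, Module.finrank k (degreeFiltration π (L + d)) <
      2 * Module.finrank k (degreeFiltration π L) := by
  cases nonempty_fintype σ
  exact exists_add_lt_two_mul_of_le_pow Module.finrank_pos finrank_degreeFiltration_le d

section Cartier

variable {σ k A : Type*} [Field k] [CommRing A] [Algebra k A] {q : ℕ} {C : Module.End k A}

/-- `q⁻¹`-linearity, the characteristic property of the Cartier operator. -/
def IsCartierLinear (q : ℕ) (C : Module.End k A) : Prop :=
  ∀ a m, C (a ^ q * m) = a * C m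

theorem IsCartierLinear.pow (hC : IsCartierLinear q C) (j : ℕ) :
    IsCartierLinear (q ^ j) (C ^ j) := by
  intro a m
  induction j generalizing m with
  | zero => simp
  | succ j ih => simp only [pow_succ C, Module.End.mul_apply, pow_succ q, pow_mul, hC _ m, ih]

theorem IsCartierLinear.exists_apply_mul_ne_zero [IsDomain A] (hC : IsCartierLinear q C)
    (hq : q ≠ 0) (hne : C ≠ 0) {v : A} (hv : v ≠ 0) : ∃ g, C (g * v) ≠ 0 := by
  obtain ⟨a, ha⟩ := DFunLike.ne_iff.mp hne
  refine ⟨v ^ (q - 1) * a, ?_⟩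
  rw [mul_right_comm, pow_sub_one_mul hq, hC]
  exact mul_ne_zero hv ha

theorem IsCartierLinear.pow_ne_zero [IsDomain A] (hC : IsCartierLinear q C) (hq : q ≠ 0)
    (hne : C ≠ 0) (j : ℕ) : C ^ j ≠ 0 := by
  induction j with
  | zero => exact one_ne_zero
  | succ j ih =>
    obtain ⟨a, ha⟩ := DFunLike.ne_iff.mp hne
    obtain ⟨g, hg⟩ := (hC.pow j).exists_apply_mul_ne_zero (_root_.pow_ne_zero j hq) ih ha
    refine DFunLike.ne_iff.mpr ⟨g ^ q * a, ?_⟩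
    rwa [pow_succ, Module.End.mul_apply, hC]

theorem exists_isCartierLinear_of_field (p : ℕ) [Fact p.Prime] (F : Type*) [Field F]
    [Algebra (ZMod p) F] : ∃ C : Module.End (ZMod p) F, IsCartierLinear p C ∧ C 1 = 1 := by
  have : CharP F p := charP_of_injective_algebraMap (algebraMap (ZMod p) F).injective p
  let e : F ≃+* (frobenius F p).fieldRange := (frobenius F p).rangeRestrictFieldEquiv
  obtain ⟨l, hl⟩ := (LinearMap.toSpanSingleton (frobenius F p).fieldRange F 1)
    |>.exists_leftInverse_of_injective <| LinearMap.ker_eq_bot.mpr fun a b h ↦ by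
      simpa [Subfield.smul_def] using h
  have hl1 : l 1 = 1 := by simpa using LinearMap.congr_fun hl 1
  refine ⟨((e.symm : _ →+ F).comp l.toAddMonoidHom).toZModLinearMap p, fun a m ↦ ?_, ?_⟩
  · change e.symm (l (e a • m)) = a * e.symm (l m)
    rw [map_smul, smul_eq_mul, map_mul, e.symm_apply_apply]
  · exact (congrArg e.symm hl1).trans (map_one _)

theorem exists_isCartierLinear {p : ℕ} [Fact p.Prime] [IsDomain A] [Algebra (ZMod p) A] [Finite σ]
    {π : MvPolynomial σ (ZMod p) →ₐ[ZMod p] A} (hπ : Function.Surjective π) :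
    ∃ C : Module.End (ZMod p) A, IsCartierLinear p C ∧ C ≠ 0 := by
  cases nonempty_fintype σ
  have hp : p.Prime := Fact.out
  let ι : A →ₐ[ZMod p] FractionRing A := IsScalarTower.toAlgHom _ _ _
  have hι : Function.Injective ι := IsFractionRing.injective A (FractionRing A)
  obtain ⟨C₀, hC₀, hC₀1⟩ := exists_isCartierLinear_of_field p (FractionRing A)
  have : Finite (degreeFiltration π (Fintype.card σ * p)) := Module.finite_of_finite (ZMod p)
  obtain ⟨⟨d, hd⟩, hint⟩ := IsLocalization.exist_integer_multiples_of_finite (nonZeroDivisors A)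
    fun r : degreeFiltration π (Fintype.card σ * p) ↦ C₀ (ι r)
  let C₁ : A →ₗ[ZMod p] FractionRing A := LinearMap.mulLeft _ (ι d) ∘ₗ C₀ ∘ₗ ι.toLinearMap
  have hC₁ (b r : A) : C₁ (b ^ p * r) = ι b * C₁ r := by
    simp [C₁, hC₀ _ _, mul_left_comm]
  have hrange (a : A) : C₁ a ∈ LinearMap.range ι.toLinearMap := by
    obtain ⟨N, hN⟩ := exists_mem_degreeFiltration hπ a
    refine (Submodule.span_le (p := (LinearMap.range ι.toLinearMap).comap C₁)).mpr ?_
      (degreeFiltration_le_span hp.pos N hN)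
    rintro _ ⟨b, -, r, hr, rfl⟩
    obtain ⟨u, hu⟩ := hint ⟨r, hr⟩
    refine ⟨b * u, ?_⟩
    rw [hC₁]
    simp [C₁, ι, hu, Algebra.smul_def]
  let C : Module.End (ZMod p) A :=
    ((LinearEquiv.ofInjective ι.toLinearMap hι).symm : _ →ₗ[ZMod p] A) ∘ₗ C₁.codRestrict _ hrange
  have hC (a : A) : ι (C a) = C₁ a :=
    congrArg Subtype.val ((LinearEquiv.ofInjective ι.toLinearMap hι).apply_symm_apply _)
  refine ⟨C, fun a m ↦ hι ?_, DFunLike.ne_iff.mpr ⟨1, fun h ↦ ?_⟩⟩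
  · rw [hC, hC₁, map_mul, hC]
  · have hd0 : ι d = 0 := by simpa [C₁, h, hC₀1] using (hC 1).symm
    exact nonZeroDivisors.ne_zero hd (hι (hd0.trans (map_zero ι).symm))

variable {π : MvPolynomial σ k →ₐ[k] A}

theorem IsCartierLinear.exists_mem_degreeFiltration_apply_mul_ne_zero [Fintype σ] [IsDomain A]
    (hC : IsCartierLinear q C) (hq : 0 < q) (hne : C ≠ 0) (hπ : Function.Surjective π) {v : A}
    (hv : v ≠ 0) : ∃ g ∈ degreeFiltration π (Fintype.card σ * q), C (g * v) ≠ 0 := by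
  by_contra! hzero
  obtain ⟨g, hg⟩ := hC.exists_apply_mul_ne_zero hq.ne' hne hv
  obtain ⟨N, hN⟩ := exists_mem_degreeFiltration hπ g
  refine hg ((Submodule.span_le (p := LinearMap.ker (C ∘ₗ LinearMap.mulRight k v))).mpr ?_
    (degreeFiltration_le_span hq N hN))
  rintro _ ⟨b, -, r, hr, rfl⟩
  change C (b ^ q * r * v) = 0
  rw [mul_assoc, hC, hzero r hr, mul_zero]

theorem IsCartierLinear.exists_degreeFiltration_le_comap [Finite σ] (hC : IsCartierLinear q C)
    (hq : 0 < q) (hπ : Function.Surjective π) :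
    ∃ c, ∀ N, degreeFiltration π N ≤ (degreeFiltration π (N / q + c)).comap C := by
  cases nonempty_fintype σ
  obtain ⟨c, hc⟩ := exists_le_degreeFiltration hπ
    ((Submodule.FG.of_finite (N := degreeFiltration π (Fintype.card σ * q))).map C)
  refine ⟨c, fun N ↦ (degreeFiltration_le_span hq N).trans (Submodule.span_le.mpr ?_)⟩
  rintro _ ⟨b, hb, r, hr, rfl⟩
  change C (b ^ q * r) ∈ degreeFiltration π _
  rw [hC]
  exact mul_mem_degreeFiltration hb (hc (Submodule.mem_map_of_mem hr))

theorem IsCartierLinear.exists_forall_degreeFiltration_le_comap_pow [Finite σ]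
    (hC : IsCartierLinear q C) (hq : 2 ≤ q) (hπ : Function.Surjective π) :
    ∃ c, ∀ j N,
      degreeFiltration π (q ^ j * N + c) ≤ (degreeFiltration π (N + c)).comap (C ^ j) := by
  obtain ⟨c, hc⟩ := hC.exists_degreeFiltration_le_comap (by omega) hπ
  refine ⟨2 * c, fun j ↦ ?_⟩
  induction j with
  | zero => intro N; simp [Module.End.one_eq_id]
  | succ j ih =>
    intro N a ha
    have hdeg : (q ^ (j + 1) * N + 2 * c) / q + c ≤ q ^ j * N + 2 * c := by
      have hdiv : (q ^ (j + 1) * N + 2 * c) / q = q ^ j * N + 2 * c / q := by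
        rw [pow_succ', mul_assoc, Nat.mul_add_div (by omega)]
      have hc' : 2 * c / q ≤ 2 * c / 2 := Nat.div_le_div_left hq two_pos
      omega
    rw [Submodule.mem_comap, pow_succ, Module.End.mul_apply]
    exact ih N ((degreeFiltration π).mono hdeg (hc _ ha))

end Cartier

section Twist

open Filter

variable {k A : Type*} [Field k] [CommRing A] [Algebra k A] {q : ℕ} {C : Module.End k A}
  {φ : A →ₐ[k] A}

/-- The ideal of the scheme of points at which the endomorphism `φ` agrees with the `q`-power
map. -/
def frobeniusCoincidenceIdeal (φ : A →ₐ[k] A) (q : ℕ) : Ideal A :=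
  Ideal.span (Set.range fun a ↦ φ a - a ^ q)

/-- The operators `v ↦ C (h * φ v)`, which for a Cartier operator `C` are a `q⁻¹`-linear
counterpart of `φ`. -/
def twist (C : Module.End k A) (φ : A →ₐ[k] A) : A →ₗ[k] Module.End k A :=
  ((LinearMap.mul k A).compr₂ C).compl₂ φ.toLinearMap

theorem twist_apply (h v : A) : twist C φ h v = C (h * φ v) := rfl

theorem IsCartierLinear.twist_apply_pow_mul (hC : IsCartierLinear q C) (h c v : A) :
    twist C φ h (c ^ q * v) = φ c * twist C φ h v := by
  rw [twist_apply, map_mul φ, map_pow, mul_left_comm, hC, twist_apply]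

theorem IsCartierLinear.prod_twist_apply_pow_mul (hC : IsCartierLinear q C) (l : List A) (c v : A) :
    (l.map (twist C φ)).prod (c ^ q ^ l.length * v) =
      (φ ^ l.length) c * (l.map (twist C φ)).prod v := by
  induction l generalizing c with
  | nil => simp
  | cons h l ih =>
    simp only [List.map_cons, List.prod_cons, Module.End.mul_apply, List.length_cons]
    rw [pow_succ', pow_mul, ih, map_pow, hC.twist_apply_pow_mul, pow_succ', AlgHom.mul_apply]

variable {F : ℕ →o Submodule k A} [∀ N, FiniteDimensional k (F N)]

theorem IsCartierLinear.eventually_traceOn_twist_mul_prod_eq_zero (hC : IsCartierLinear q C)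
    (hcontr : ∀ h, IsContracting F (twist C φ h))
    (hmul : ∀ c, ∃ d, ∀ N, F N ≤ (F (N + d)).comap (LinearMap.mulLeft k c)) {e : A} {l : List A}
    (he : e ∈ frobeniusCoincidenceIdeal (φ ^ (l.length + 1)) (q ^ (l.length + 1))) :
    ∀ᶠ N in atTop, traceOn (F N) (twist C φ e * (l.map (twist C φ)).prod) = 0 := by
  suffices ∀ h, ∀ᶠ N in atTop, traceOn (F N) (twist C φ (h * e) * (l.map (twist C φ)).prod) = 0 by
    simpa using this 1
  set T := twist C φ
  induction he using Submodule.span_induction with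
  | mem e he =>
    obtain ⟨c, rfl⟩ := he
    intro h
    obtain ⟨d, hd⟩ := hmul (c ^ q ^ l.length)
    have hword : IsContracting F (T h * (l.map T).prod) :=
      .list_prod (l := T h :: l.map T) (by simp) (by simp [T, hcontr])
    have hright : T h * (l.map T).prod * LinearMap.mulLeft k (c ^ q ^ l.length) =
        T (h * (φ ^ (l.length + 1)) c) * (l.map T).prod := LinearMap.ext fun v ↦ by
      simp [T, hC.prod_twist_apply_pow_mul, twist_apply, pow_succ', mul_assoc]
    have hleft : LinearMap.mulLeft k (c ^ q ^ l.length) * (T h * (l.map T).prod) =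
        T (h * c ^ q ^ (l.length + 1)) * (l.map T).prod := LinearMap.ext fun v ↦ by
      simp [T, twist_apply, pow_succ, pow_mul, mul_assoc, mul_left_comm h, hC _ _]
    filter_upwards [hword.eventually_traceOn_mul_comm hd] with N hN
    rw [hright, hleft] at hN
    rw [mul_sub, map_sub, sub_mul, map_sub, hN, sub_self]
  | zero => simp
  | add e₁ e₂ _ _ ih₁ ih₂ =>
    intro h
    filter_upwards [ih₁ h, ih₂ h] with N h₁ h₂
    rw [mul_add, map_add, add_mul, map_add, h₁, h₂, add_zero]
  | smul a e _ ih => exact fun h ↦ by simpa [mul_assoc] using ih (h * a)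

end Twist

section TwistDegree

open Filter

variable {σ k A : Type*} [Field k] [CommRing A] [Algebra k A] {π : MvPolynomial σ k →ₐ[k] A}
  {q c δ : ℕ} {C : Module.End k A} {φ : A →ₐ[k] A}

theorem degreeFiltration_le_comap_twist
    (hC : ∀ N, degreeFiltration π (q * N + c) ≤ (degreeFiltration π (N + c)).comap C)
    (hφ : ∀ N, degreeFiltration π N ≤ (degreeFiltration π (δ * N)).comap φ.toLinearMap)
    {h : A} {m M N : ℕ} (hh : h ∈ degreeFiltration π m) (hle : m + δ * N ≤ q * M + c) :
    degreeFiltration π N ≤ (degreeFiltration π (M + c)).comap (twist C φ h) := fun _ hv ↦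
  hC M ((degreeFiltration π).mono hle (mul_mem_degreeFiltration hh (hφ N hv)))

theorem isContracting_twist (hπ : Function.Surjective π)
    (hC : ∀ N, degreeFiltration π (q * N + c) ≤ (degreeFiltration π (N + c)).comap C)
    (hφ : ∀ N, degreeFiltration π N ≤ (degreeFiltration π (δ * N)).comap φ.toLinearMap)
    (hδ : δ < q) (h : A) : IsContracting (degreeFiltration π) (twist C φ h) := by
  obtain ⟨m, hm⟩ := exists_mem_degreeFiltration hπ h
  intro d
  filter_upwards [eventually_ge_atTop (m + δ * (c + d) + c)] with N hN
  obtain ⟨M, rfl⟩ := Nat.exists_eq_add_of_le' ((Nat.le_add_left _ _).trans hN)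
  refine degreeFiltration_le_comap_twist hC hφ hm ?_
  calc m + δ * (M + c + d) = m + δ * (c + d) + δ * M := by ring
    _ ≤ M + δ * M := by gcongr; omega
    _ = (δ + 1) * M := by ring
    _ ≤ q * M + c := le_add_right (Nat.mul_le_mul_right M hδ)

theorem degreeFiltration_succ_le_comap_twist
    (hC : ∀ N, degreeFiltration π (q * N + c) ≤ (degreeFiltration π (N + c)).comap C)
    (hφ : ∀ N, degreeFiltration π N ≤ (degreeFiltration π (δ * N)).comap φ.toLinearMap)
    {E g : A} {e L N : ℕ} (hE : E ∈ degreeFiltration π e) (hg : g ∈ degreeFiltration π (q * L))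
    (hq : e + δ * (L + c + 2) ≤ q) (hN : L + c + 1 ≤ N) :
    degreeFiltration π (N + 1) ≤ (degreeFiltration π N).comap (twist C φ (E * g)) := by
  obtain ⟨t, rfl⟩ := Nat.exists_eq_add_of_le hN
  rw [show L + c + 1 + t = L + 1 + t + c by ring]
  refine degreeFiltration_le_comap_twist hC hφ (mul_mem_degreeFiltration hE hg) ?_
  have hδ : δ ≤ q := by nlinarith
  calc e + q * L + δ * (L + 1 + t + c + 1) = e + δ * (L + c + 2) + q * L + δ * t := by ring
    _ ≤ q + q * L + q * t := by gcongr
    _ ≤ q * (L + 1 + t) + c := by linarith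

theorem finrank_degreeFiltration_le_finrank_span_twist [Fintype σ] [IsDomain A]
    (hC : IsCartierLinear q C) (hq : 0 < q) (hne : C ≠ 0) (hπ : Function.Surjective π)
    (hφ : Function.Injective φ) {E v : A} (hE : E ≠ 0) (hv : v ≠ 0) (L : ℕ) :
    Module.finrank k (degreeFiltration π L) ≤ Module.finrank k (Submodule.span k ((· v) ''
      ((fun g ↦ twist C φ (E * g)) '' degreeFiltration π (q * (L + Fintype.card σ))))) := by
  obtain ⟨g, hg, hne⟩ := hC.exists_mem_degreeFiltration_apply_mul_ne_zero hq hne hπ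
    (mul_ne_zero hE ((map_ne_zero_iff φ hφ).mpr hv))
  let ev : A →ₗ[k] A := C ∘ₗ LinearMap.mulRight k (φ v) ∘ₗ LinearMap.mulLeft k E
  have hspan : Submodule.span k
      ((· v) '' ((fun g ↦ twist C φ (E * g)) '' degreeFiltration π (q * (L + Fintype.card σ)))) =
        (degreeFiltration π (q * (L + Fintype.card σ))).map ev := by
    rw [Set.image_image, ← Submodule.span_eq (Submodule.map _ _)]
    rfl
  have hmap : (degreeFiltration π L).map (LinearMap.mulRight k (C (g * (E * φ v)))) ≤
      (degreeFiltration π (q * (L + Fintype.card σ))).map ev := by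
    rintro _ ⟨a, ha, rfl⟩
    refine ⟨a ^ q * g, ?_, ?_⟩
    · rw [mul_add, mul_comm q (Fintype.card σ)]
      exact mul_mem_degreeFiltration (pow_mem_degreeFiltration ha q) hg
    · change C (E * (a ^ q * g) * φ v) = a * C (g * (E * φ v))
      rw [← hC]
      ring_nf
  rw [hspan, (Submodule.equivMapOfInjective (LinearMap.mulRight k _)
    (mul_left_injective₀ hne) (degreeFiltration π L)).finrank_eq]
  exact Submodule.finrank_mono hmap

end TwistDegree

section WordBound

open Filter

variable {σ A : Type*} [Finite σ] {p : ℕ} [Fact p.Prime] [CommRing A] [IsDomain A]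
  [Algebra (ZMod p) A] {π : MvPolynomial σ (ZMod p) →ₐ[ZMod p] A} {C : Module.End (ZMod p) A}
  {φ : A →ₐ[ZMod p] A}

theorem exists_length_bound_traceOn_prod_twist_ne_zero (hπ : Function.Surjective π)
    (hC : IsCartierLinear p C) (hne : C ≠ 0) (hφ : Function.Injective φ) :
    ∃ B, ∀ E ≠ 0, ∀ᶠ j in atTop, ∃ l : List A, l ≠ [] ∧ l.length ≤ B ∧
      ∀ᶠ N in atTop, traceOn (degreeFiltration π N)
        (l.map fun g ↦ twist (C ^ j) φ (E * g)).prod ≠ 0 := by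
  cases nonempty_fintype σ
  have hp : p.Prime := Fact.out
  obtain ⟨c, hc⟩ := hC.exists_forall_degreeFiltration_le_comap_pow hp.two_le hπ
  obtain ⟨δ, hδ⟩ := exists_degreeFiltration_le_comap φ hπ
  obtain ⟨L, hL⟩ := exists_finrank_degreeFiltration_add_lt π (Fintype.card σ + c + 1)
  rw [← add_assoc, ← add_assoc] at hL
  let r := L + Fintype.card σ + c + 1
  obtain ⟨B, hB⟩ := exists_length_bound_traceOn_ne_zero (degreeFiltration π r)
  refine ⟨B, fun E hE ↦ ?_⟩
  obtain ⟨e, he⟩ := exists_mem_degreeFiltration hπ E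
  filter_upwards [(tendsto_pow_atTop_atTop_of_one_lt hp.one_lt).eventually_ge_atTop
    (e + δ * (L + Fintype.card σ + c + 2))] with j hj
  let T (g : A) : Module.End (ZMod p) A := twist (C ^ j) φ (E * g)
  let S := T '' degreeFiltration π (p ^ j * (L + Fintype.card σ))
  have hlower : ∀ s ∈ S, ∀ N ≥ r,
      degreeFiltration π (N + 1) ≤ (degreeFiltration π N).comap s := by
    rintro _ ⟨g, hg, rfl⟩ N hN
    exact degreeFiltration_succ_le_comap_twist (hc j) hδ he hg hj hN
  have hstable : ∀ s ∈ S, degreeFiltration π r ≤ (degreeFiltration π r).comap s := fun s hs ↦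
    ((degreeFiltration π).mono r.le_succ).trans (hlower s hs r le_rfl)
  have hexpand : ∀ v ∈ degreeFiltration π r, v ≠ 0 →
      Module.finrank (ZMod p) (degreeFiltration π r) <
        2 * Module.finrank (ZMod p) (Submodule.span (ZMod p) ((· v) '' S)) := by
    intro v _ hv0
    refine hL.trans_le (Nat.mul_le_mul_left 2 ?_)
    exact finrank_degreeFiltration_le_finrank_span_twist (hC.pow j) (pow_pos hp.pos j)
      (hC.pow_ne_zero hp.ne_zero hne j) hπ hφ hE hv0 L
  obtain ⟨l, hl, hlen, hlS, htr⟩ := hB S hstable hexpand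
  have hprod := l.prod_induction_nonempty
    (fun s ↦ ∀ N ≥ r, degreeFiltration π (N + 1) ≤ (degreeFiltration π N).comap s)
    (fun s t hs ht N hN x hx ↦ hs N hN ((degreeFiltration π).mono N.le_succ (ht N hN hx)))
    hl fun s hs ↦ hlower s (hlS s hs)
  obtain ⟨l, rfl⟩ : l ∈ Set.range (List.map T) := by
    rw [Set.range_list_map]
    exact fun s hs ↦ Set.image_subset_range _ _ (hlS s hs)
  refine ⟨l, by simpa using hl, by simpa using hlen, ?_⟩
  filter_upwards [eventually_ge_atTop r] with N hN
  rwa [traceOn_eq_of_lowering hprod hN]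

theorem exists_bound_notMem_frobeniusCoincidenceIdeal (hπ : Function.Surjective π)
    (hφ : Function.Injective φ) :
    ∃ B, ∀ E ≠ 0, ∀ᶠ j in atTop, ∃ b < B,
      E ∉ frobeniusCoincidenceIdeal (φ ^ (b + 1)) ((p ^ j) ^ (b + 1)) := by
  have hp : p.Prime := Fact.out
  obtain ⟨C, hC, hne⟩ := exists_isCartierLinear hπ
  obtain ⟨c, hc⟩ := hC.exists_forall_degreeFiltration_le_comap_pow hp.two_le hπ
  obtain ⟨δ, hδ⟩ := exists_degreeFiltration_le_comap φ hπ
  obtain ⟨B, hB⟩ := exists_length_bound_traceOn_prod_twist_ne_zero hπ hC hne hφ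
  refine ⟨B, fun E hE ↦ ?_⟩
  filter_upwards [hB E hE, (tendsto_pow_atTop_atTop_of_one_lt hp.one_lt).eventually_gt_atTop δ]
    with j ⟨l, hl, hlen, htr⟩ hj
  obtain ⟨g, l, rfl⟩ := List.exists_cons_of_ne_nil hl
  refine ⟨l.length, hlen, fun hE ↦ ?_⟩
  have hzero := (hC.pow j).eventually_traceOn_twist_mul_prod_eq_zero (l := l.map (E * ·))
    (isContracting_twist hπ (hc j) hδ hj)
    (fun a ↦ (exists_mem_degreeFiltration hπ a).imp fun d hd N x hx ↦ by
      rw [add_comm]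
      exact mul_mem_degreeFiltration hd hx)
    (by simpa using Ideal.mul_mem_right g _ hE)
  obtain ⟨N, hN, hN'⟩ := (htr.and hzero).exists
  exact hN (by simpa [Function.comp_def] using hN')

end WordBound

section KroneckerSubstitution

open MvPolynomial

variable {k : Type*} [CommRing k] {d q : ℕ}

/-- Kronecker's substitution `Xᵢ ↦ X ^ q ^ i`, which encodes a polynomial in several variables by
reading its exponents as digits in base `q`. -/
noncomputable def kroneckerSubstitution (k : Type*) [CommRing k] (d q : ℕ) :
    MvPolynomial (Fin d) k →ₐ[k] Polynomial k :=
  aeval fun i ↦ Polynomial.X ^ q ^ (i : ℕ)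

theorem kroneckerSubstitution_monomial (α : Fin d →₀ ℕ) (c : k) :
    kroneckerSubstitution k d q (monomial α c) =
      Polynomial.monomial (∑ i, α i * q ^ (i : ℕ)) c := by
  rw [kroneckerSubstitution, aeval_monomial, Finsupp.prod_fintype _ _ (by simp),
    ← Polynomial.C_mul_X_pow_eq_monomial, ← Finset.prod_pow_eq_pow_sum]
  simp_rw [← pow_mul, mul_comm (q ^ _), Polynomial.algebraMap_eq]

theorem kroneckerSubstitution_apply (P : MvPolynomial (Fin d) k) :
    kroneckerSubstitution k d q P =
      ∑ α ∈ P.support, Polynomial.monomial (∑ i, α i * q ^ (i : ℕ)) (P.coeff α) := by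
  conv_lhs => rw [P.as_sum, map_sum]
  simp_rw [kroneckerSubstitution_monomial]

theorem sum_exponents_le_totalDegree {P : MvPolynomial (Fin d) k} {α : Fin d →₀ ℕ}
    (hα : α ∈ P.support) : ∑ i, α i ≤ P.totalDegree := by
  simpa [Finsupp.sum_fintype] using le_totalDegree hα

theorem kroneckerSubstitution_ne_zero {P : MvPolynomial (Fin d) k} (hP : P ≠ 0)
    (hq : P.totalDegree < q) : kroneckerSubstitution k d q P ≠ 0 := by
  have hdigit : ∀ α ∈ P.support, ∀ i, α i < q := fun α hα i ↦
    ((Finset.single_le_sum_of_canonicallyOrdered (Finset.mem_univ i)).trans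
      (sum_exponents_le_totalDegree hα)).trans_lt hq
  have hinj : ∀ α ∈ P.support, ∀ β ∈ P.support,
      ∑ i, α i * q ^ (i : ℕ) = ∑ i, β i * q ^ (i : ℕ) → α = β := by
    intro α hα β hβ h
    have := finFunctionFinEquiv.injective (a₁ := fun i ↦ ⟨α i, hdigit α hα i⟩)
      (a₂ := fun i ↦ ⟨β i, hdigit β hβ i⟩) (Fin.ext (by simpa using h))
    exact Finsupp.ext fun i ↦ congrArg Fin.val (congrFun this i)
  obtain ⟨α, hα⟩ := support_nonempty.2 hP
  intro h0
  have hcoeff := congrArg (Polynomial.coeff · (∑ i, α i * q ^ (i : ℕ))) h0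
  simp only [kroneckerSubstitution_apply, Polynomial.finsetSum_coeff, Polynomial.coeff_monomial,
    Polynomial.coeff_zero] at hcoeff
  rw [Finset.sum_eq_single_of_mem α hα fun β hβ hne ↦ if_neg fun h ↦ hne (hinj β hβ α hα h),
    if_pos rfl] at hcoeff
  exact mem_support_iff.1 hα hcoeff

theorem natDegree_kroneckerSubstitution_le (hq : 0 < q) (P : MvPolynomial (Fin (d + 1)) k) :
    (kroneckerSubstitution k (d + 1) q P).natDegree ≤ P.totalDegree * q ^ d := by
  rw [kroneckerSubstitution_apply]
  refine Polynomial.natDegree_sum_le_of_forall_le _ _ fun α hα ↦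
    (Polynomial.natDegree_monomial_le _).trans ?_
  calc ∑ i, α i * q ^ (i : ℕ)
      ≤ ∑ i, α i * q ^ d := Finset.sum_le_sum fun i _ ↦
        Nat.mul_le_mul_left _ (Nat.pow_le_pow_right hq (Nat.lt_succ_iff.1 i.2))
    _ = (∑ i, α i) * q ^ d := by rw [Finset.sum_mul]
    _ ≤ P.totalDegree * q ^ d := Nat.mul_le_mul_right _ (sum_exponents_le_totalDegree hα)

end KroneckerSubstitution

section UniformNullstellensatz

open Filter

variable {k A : Type*} [Field k] [CommRing A] [Algebra k A]

theorem exists_forall_exists_aeval_eq_zero (k A : Type*) [Field k] [CommRing A] [IsDomain A]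
    [Algebra k A] [Algebra.FiniteType k A] :
    ∃ d, ∀ x : Fin (d + 1) → A, ∃ P ≠ 0, MvPolynomial.aeval (R := k) x P = 0 := by
  obtain ⟨d, hd⟩ := Cardinal.lt_aleph0.1 (trdeg_lt_aleph0_of_finiteType (R := k) (S := A))
  refine ⟨d, fun x ↦ ?_⟩
  by_contra! h
  have hx : AlgebraicIndependent k x := algebraicIndependent_iff.2 fun P hP ↦
    not_imp_not.1 (h P) hP
  have := hx.lift_cardinalMk_le_trdeg
  simp [hd] at this

theorem pow_natDegree_mem_of_mem_jacobson {I : Ideal A} {x : A} (hx : x ∈ I.jacobson)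
    {f : Polynomial k} (hf : f ≠ 0) (hfx : Polynomial.aeval x f ∈ I) : x ^ f.natDegree ∈ I := by
  obtain ⟨u, hu, hnd⟩ := Polynomial.exists_eq_pow_rootMultiplicity_mul_and_not_dvd f hf 0
  set e := f.rootMultiplicity 0
  rw [map_zero, sub_zero] at hu hnd
  have hc : u.coeff 0 ≠ 0 := fun h ↦ hnd (Polynomial.X_dvd_iff.2 h)
  have hunit : (u.coeff 0)⁻¹ • Polynomial.aeval x u - 1 ∈ I.jacobson := by
    have hdiv : Polynomial.aeval x u =
        Polynomial.aeval x u.divX * x + algebraMap k A (u.coeff 0) := by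
      conv_lhs => rw [← Polynomial.divX_mul_X_add u]
      simp
    rw [hdiv, Algebra.smul_def, mul_add, ← map_mul, inv_mul_cancel₀ hc, map_one,
      add_sub_cancel_right, ← mul_assoc]
    exact Ideal.mul_mem_left _ _ hx
  obtain ⟨s, hs⟩ := Ideal.exists_mul_sub_mem_of_sub_one_mem_jacobson _ hunit
  have hfx' : Polynomial.aeval x f = x ^ e * Polynomial.aeval x u := by
    rw [hu, map_mul, map_pow, Polynomial.aeval_X]
  have hpow : x ^ e ∈ I := by
    rw [hfx'] at hfx
    convert I.sub_mem (I.mul_mem_left (s * algebraMap k A (u.coeff 0)⁻¹) hfx)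
      (I.mul_mem_left (x ^ e) hs) using 1
    rw [Algebra.smul_def]
    ring
  exact I.pow_mem_of_pow_mem hpow
    ((Polynomial.natDegree_X_pow e).symm.trans_le (Polynomial.natDegree_le_of_dvd ⟨u, hu⟩ hf))

theorem pow_apply_sub_pow_mem_frobeniusCoincidenceIdeal (ψ : A →ₐ[k] A) (q i : ℕ) (a : A) :
    (ψ ^ i) a - a ^ q ^ i ∈ frobeniusCoincidenceIdeal ψ q := by
  induction i with
  | zero => simp
  | succ i ih =>
    have h1 : ψ ((ψ ^ i) a) - (ψ ^ i) a ^ q ∈ frobeniusCoincidenceIdeal ψ q :=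
      Ideal.subset_span ⟨_, rfl⟩
    have h2 : (ψ ^ i) a ^ q - (a ^ q ^ i) ^ q ∈ frobeniusCoincidenceIdeal ψ q :=
      Ideal.mem_of_dvd _ (sub_dvd_pow_sub_pow _ _ q) ih
    simpa [pow_succ' ψ, pow_succ q, pow_mul] using add_mem h1 h2

/-- A maximal ideal `m` such that some positive power of the endomorphism `φ` induces the identity
on the quotient by `m`: a closed periodic point of the affine dynamical system given by `φ`, fixed
by that power together with its residue field. -/
def IsPeriodicMaximal (φ : A →ₐ[k] A) (m : Ideal A) : Prop :=
  m.IsMaximal ∧ ∃ b, 1 ≤ b ∧ ∀ a, (φ ^ b) a - a ∈ m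

/-- Density of the periodic points of `φ`, in the form in which orbits are required to avoid the
zero locus of `D` whenever no iterate of `φ` kills `D`. -/
def HasDensePeriodicPoints (φ : A →ₐ[k] A) : Prop :=
  ∀ D, (∀ n, (φ ^ n) D ≠ 0) → ∃ m, IsPeriodicMaximal φ m ∧ ∀ n, (φ ^ n) D ∉ m

variable {p : ℕ} [Fact p.Prime] [Algebra (ZMod p) A] {φ : A →ₐ[ZMod p] A}

theorem isPeriodicMaximal_of_frobeniusCoincidenceIdeal_le [Algebra.FiniteType (ZMod p) A]
    {m : Ideal A} (hm : m.IsMaximal) {b : ℕ} (hb : 1 ≤ b) {j : ℕ}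
    (hle : frobeniusCoincidenceIdeal (φ ^ b) ((p ^ j) ^ b) ≤ m) : IsPeriodicMaximal φ m := by
  let _ : Field (A ⧸ m) := Ideal.Quotient.field m
  have : Module.Finite (ZMod p) (A ⧸ m) := finite_of_finite_type_of_isJacobsonRing _ _
  have : Fintype (A ⧸ m) := @Fintype.ofFinite _ (Module.finite_of_finite (ZMod p))
  have : CharP (A ⧸ m) p := charP_of_injective_algebraMap (algebraMap (ZMod p) (A ⧸ m)).injective p
  obtain ⟨r, -, hr⟩ := FiniteField.card (A ⧸ m) p
  refine ⟨hm, b * r, Nat.mul_pos hb r.pos, fun a ↦ ?_⟩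
  have hcard : ((p ^ j) ^ b) ^ (r : ℕ) = Fintype.card (A ⧸ m) ^ (j * b) := by
    rw [hr]
    ring
  have := hle (pow_apply_sub_pow_mem_frobeniusCoincidenceIdeal (φ ^ b) _ r a)
  rwa [← Ideal.Quotient.eq, map_pow, hcard, FiniteField.pow_card_pow, ← pow_mul,
    Ideal.Quotient.eq] at this

theorem prod_pow_apply_mem_of_frobeniusCoincidenceIdeal_le {b q : ℕ} (hb : 1 ≤ b) {m : Ideal A}
    [hm : m.IsPrime] (hle : frobeniusCoincidenceIdeal (φ ^ b) q ≤ m) {D : A} {n : ℕ}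
    (hn : (φ ^ n) D ∈ m) : ∏ i ∈ Finset.range b, (φ ^ i) D ∈ m := by
  refine m.mem_of_dvd (Finset.dvd_prod_of_mem _ (Finset.mem_range.2 (n.mod_lt hb))) ?_
  have := hle (pow_apply_sub_pow_mem_frobeniusCoincidenceIdeal (φ ^ b) q (n / b) ((φ ^ (n % b)) D))
  rw [← pow_mul, ← AlgHom.mul_apply, ← pow_add, Nat.div_add_mod,
    Submodule.sub_mem_iff_right _ hn] at this
  exact hm.mem_of_pow_mem _ this

/-- A polynomial relation `P` between the iterates of `x` turns, modulo the coincidence ideal, into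
a one-variable relation of controlled degree. -/
theorem pow_apply_pow_totalDegree_mem_frobeniusCoincidenceIdeal {ψ : A →ₐ[k] A} {d q : ℕ} {x : A}
    (hx : x ∈ (frobeniusCoincidenceIdeal ψ q).jacobson) {P : MvPolynomial (Fin (d + 1)) k}
    (hP : P ≠ 0) (hPx : MvPolynomial.aeval (fun i : Fin (d + 1) ↦ (ψ ^ (i : ℕ)) x) P = 0)
    (hq : P.totalDegree < q) :
    (ψ ^ d) x ^ P.totalDegree ∈ frobeniusCoincidenceIdeal ψ q := by
  set I := frobeniusCoincidenceIdeal ψ q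
  have hmod (i : ℕ) : Ideal.Quotient.mkₐ k I ((ψ ^ i) x) = Ideal.Quotient.mkₐ k I (x ^ q ^ i) :=
    Ideal.Quotient.eq.2 (pow_apply_sub_pow_mem_frobeniusCoincidenceIdeal ψ q i x)
  have hsubst : Polynomial.aeval x (kroneckerSubstitution k (d + 1) q P) ∈ I := by
    have hcomp : ((Ideal.Quotient.mkₐ k I).comp (Polynomial.aeval x)).comp
        (kroneckerSubstitution k (d + 1) q) =
        (Ideal.Quotient.mkₐ k I).comp (MvPolynomial.aeval fun i : Fin (d + 1) ↦ (ψ ^ (i : ℕ)) x) :=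
      MvPolynomial.algHom_ext fun i ↦ by
        simpa [kroneckerSubstitution] using (hmod i).symm
    have := DFunLike.congr_fun hcomp P
    rw [AlgHom.comp_apply, AlgHom.comp_apply, AlgHom.comp_apply, hPx, map_zero] at this
    exact Ideal.Quotient.eq_zero_iff_mem.1 this
  have hpow : x ^ (P.totalDegree * q ^ d) ∈ I :=
    I.pow_mem_of_pow_mem
      (pow_natDegree_mem_of_mem_jacobson hx (kroneckerSubstitution_ne_zero hP hq) hsubst)
      (natDegree_kroneckerSubstitution_le (by lia) P)
  rw [← Ideal.Quotient.eq_zero_iff_mem] at hpow ⊢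
  rw [map_pow, ← Ideal.Quotient.mkₐ_eq_mk k, hmod, ← map_pow, ← pow_mul, mul_comm]
  exact hpow

theorem exists_eventually_mem_frobeniusCoincidenceIdeal [IsDomain A]
    [Algebra.FiniteType (ZMod p) A] (hφ : Function.Injective φ) {D : A} (hD : D ≠ 0)
    (hperiodic : ∀ m, IsPeriodicMaximal φ m → ∃ n, (φ ^ n) D ∈ m) {b : ℕ} (hb : 1 ≤ b) :
    ∃ E ≠ 0, ∀ᶠ j in atTop, E ∈ frobeniusCoincidenceIdeal (φ ^ b) ((p ^ j) ^ b) := by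
  have hp : p.Prime := Fact.out
  have hpow (n : ℕ) {a : A} (ha : a ≠ 0) : (φ ^ n) a ≠ 0 := by
    rw [AlgHom.coe_pow]
    exact fun h ↦ ha (hφ.iterate n (h.trans (iterate_map_zero φ n).symm))
  let Δ := ∏ i ∈ Finset.range b, (φ ^ i) D
  have hΔ : Δ ≠ 0 := Finset.prod_ne_zero_iff.2 fun i _ ↦ hpow i hD
  obtain ⟨d, hd⟩ := exists_forall_exists_aeval_eq_zero (ZMod p) A
  obtain ⟨P, hP, hPΔ⟩ := hd fun i ↦ ((φ ^ b) ^ (i : ℕ)) Δ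
  refine ⟨((φ ^ b) ^ d) Δ ^ P.totalDegree, pow_ne_zero _ (pow_mul φ b d ▸ hpow _ hΔ), ?_⟩
  filter_upwards [eventually_ge_atTop P.totalDegree] with j hj
  refine pow_apply_pow_totalDegree_mem_frobeniusCoincidenceIdeal ?_ hP hPΔ
    (hj.trans_lt ((Nat.lt_pow_self hp.one_lt).trans_le (Nat.le_self_pow (by lia) _)))
  refine Ideal.mem_sInf.2 fun m hm ↦ ?_
  have := hm.2
  obtain ⟨n, hn⟩ := hperiodic m (isPeriodicMaximal_of_frobeniusCoincidenceIdeal_le hm.2 hb hm.1)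
  exact prod_pow_apply_mem_of_frobeniusCoincidenceIdeal_le hb hm.1 hn

theorem hasDensePeriodicPoints_of_injective_zmod [IsDomain A] [Algebra.FiniteType (ZMod p) A]
    (hφ : Function.Injective φ) : HasDensePeriodicPoints φ := by
  intro D hD
  by_contra! hperiodic
  choose! E hE hEmem using fun b (hb : 1 ≤ b) ↦
    exists_eventually_mem_frobeniusCoincidenceIdeal hφ (hD 0) hperiodic hb
  obtain ⟨_, π, hπ⟩ := Algebra.FiniteType.iff_quotient_mvPolynomial''.1
    (inferInstance : Algebra.FiniteType (ZMod p) A)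
  obtain ⟨B, hB⟩ := exists_bound_notMem_frobeniusCoincidenceIdeal hπ hφ
  have hmem : ∀ᶠ j in atTop, ∀ b ∈ Finset.range B,
      E (b + 1) ∈ frobeniusCoincidenceIdeal (φ ^ (b + 1)) ((p ^ j) ^ (b + 1)) :=
    (Filter.eventually_all_finset _).2 fun b _ ↦ hEmem (b + 1) (by lia)
  have hne : ∏ b ∈ Finset.range B, E (b + 1) ≠ 0 :=
    Finset.prod_ne_zero_iff.2 fun b _ ↦ hE (b + 1) (by lia)
  obtain ⟨j, ⟨b, hb, hnot⟩, hj⟩ := ((hB _ hne).and hmem).exists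
  have hb := Finset.mem_range.2 hb
  exact hnot (Ideal.mem_of_dvd _ (Finset.dvd_prod_of_mem _ hb) (hj b hb))

end UniformNullstellensatz

section Descent

variable {k K B : Type*} [Field k] [Field K] [Algebra k K] [CommRing B] [Algebra K B] [Algebra k B]
  [IsScalarTower k K B]

theorem exists_finset_mem_adjoin_union_image (k : Type*) {K B : Type*} [CommRing k] [CommRing K]
    [Algebra k K] [CommRing B] [Algebra K B] [Algebra k B] [IsScalarTower k K B] {s : Set B}
    {a : B} (ha : a ∈ Algebra.adjoin K s) :
    ∃ c : Finset K, a ∈ Algebra.adjoin k (s ∪ algebraMap K B '' c) := by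
  classical
  have hmono {c d : Finset K} (h : c ⊆ d) : Algebra.adjoin k (s ∪ algebraMap K B '' c) ≤
      Algebra.adjoin k (s ∪ algebraMap K B '' d) :=
    Algebra.adjoin_mono (Set.union_subset_union_right _ (Set.image_mono (Finset.coe_subset.2 h)))
  induction ha using Algebra.adjoin_induction with
  | mem y hy => exact ⟨∅, Algebra.subset_adjoin (.inl hy)⟩
  | algebraMap r => exact ⟨{r}, Algebra.subset_adjoin (.inr ⟨r, by simp, rfl⟩)⟩
  | add a b _ _ iha ihb =>
    obtain ⟨c, hc⟩ := iha
    obtain ⟨d, hd⟩ := ihb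
    exact ⟨c ∪ d, add_mem (hmono Finset.subset_union_left hc)
      (hmono Finset.subset_union_right hd)⟩
  | mul a b _ _ iha ihb =>
    obtain ⟨c, hc⟩ := iha
    obtain ⟨d, hd⟩ := ihb
    exact ⟨c ∪ d, mul_mem (hmono Finset.subset_union_left hc)
      (hmono Finset.subset_union_right hd)⟩

theorem exists_fg_subalgebra_mapsTo (k : Type*) {K B : Type*} [CommRing k] [CommRing K]
    [Algebra k K] [CommRing B] [Algebra K B] [Algebra k B] [IsScalarTower k K B]
    [Algebra.FiniteType K B] (φ : B →ₐ[K] B) (D : B) :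
    ∃ B₀ : Subalgebra k B, B₀.FG ∧ D ∈ B₀ ∧ Set.MapsTo φ B₀ B₀ ∧
      Algebra.adjoin K (B₀ : Set B) = ⊤ := by
  classical
  obtain ⟨s, hs⟩ := ‹Algebra.FiniteType K B›.out
  choose c hc using fun a ↦
    exists_finset_mem_adjoin_union_image k (hs ▸ Algebra.mem_top : a ∈ Algebra.adjoin K (s : Set B))
  let d := s.biUnion (fun y ↦ c (φ y)) ∪ c D
  let G : Finset B := s ∪ d.image (algebraMap K B)
  have hsub {a : B} (ha : c a ⊆ d) : a ∈ Algebra.adjoin k (G : Set B) := by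
    refine Algebra.adjoin_mono ?_ (hc a)
    simpa [G] using Set.subset_union_of_subset_right (Set.image_mono (Finset.coe_subset.2 ha)) _
  refine ⟨Algebra.adjoin k G, ⟨G, rfl⟩, hsub Finset.subset_union_right, ?_, ?_⟩
  · suffices Algebra.adjoin k (G : Set B) ≤
        (Algebra.adjoin k (G : Set B)).comap (φ.restrictScalars k) from this
    refine Algebra.adjoin_le fun y hy ↦ ?_
    obtain hy | ⟨r, -, rfl⟩ : y ∈ s ∨ ∃ r ∈ d, algebraMap K B r = y := by simpa [G] using hy
    · exact hsub ((Finset.subset_biUnion_of_mem (fun y ↦ c (φ y)) hy).trans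
        Finset.subset_union_left)
    · simpa using Algebra.subset_adjoin hy
  · refine top_unique (hs ▸ Algebra.adjoin_mono ?_)
    exact subset_trans (by simp [G]) (Algebra.subset_adjoin (R := k) (s := (G : Set B)))

theorem isIntegral_of_adjoin_eq_top [Algebra.IsAlgebraic k K] {B₀ : Subalgebra k B}
    (h : Algebra.adjoin K (B₀ : Set B) = ⊤) : Algebra.IsIntegral B₀ B := by
  refine ⟨fun y ↦ ?_⟩
  induction (h ▸ Algebra.mem_top : y ∈ Algebra.adjoin K (B₀ : Set B)) using
    Algebra.adjoin_induction with
  | mem y hy => exact isIntegral_algebraMap (x := (⟨y, hy⟩ : B₀))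
  | algebraMap r => exact ((Algebra.IsIntegral.isIntegral (R := k) r).algebraMap (B := B)).tower_top
  | add a b _ _ iha ihb => exact iha.add ihb
  | mul a b _ _ iha ihb => exact iha.mul ihb

theorem apply_pow_of_semiconj {k k' A A' : Type*} [CommSemiring k] [Semiring A] [Algebra k A]
    [CommSemiring k'] [Semiring A'] [Algebra k' A'] {φ : A →ₐ[k] A} {φ' : A' →ₐ[k'] A'} {ρ : A → A'}
    (h : Function.Semiconj ρ φ φ') (n : ℕ) (a : A) : ρ ((φ ^ n) a) = (φ' ^ n) (ρ a) := by
  rw [AlgHom.coe_pow, (h.iterate_right n).eq, AlgHom.coe_pow]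

theorem IsPeriodicMaximal.exists_comap_eq [Algebra.IsAlgebraic k K] {B₀ : Subalgebra k B}
    (h : Algebra.adjoin K (B₀ : Set B) = ⊤) {φ : B →ₐ[K] B} {φ₀ : B₀ →ₐ[k] B₀}
    (hφ₀ : Function.Semiconj B₀.val φ₀ φ) {m : Ideal B₀} (hm : IsPeriodicMaximal φ₀ m) :
    ∃ Q, IsPeriodicMaximal φ Q ∧ Q.comap B₀.val = m := by
  have := isIntegral_of_adjoin_eq_top h
  obtain ⟨hmax, b, hb, hper⟩ := hm
  obtain ⟨Q, hQ, rfl⟩ := Ideal.exists_ideal_over_maximal_of_isIntegral (S := B) m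
    (((RingHom.injective_iff_ker_eq_bot _).1 Subtype.val_injective).trans_le bot_le)
  refine ⟨Q, ⟨hQ, b, hb, fun a ↦ ?_⟩, rfl⟩
  have hcomp : (Ideal.Quotient.mkₐ K Q).comp (φ ^ b) = Ideal.Quotient.mkₐ K Q :=
    AlgHom.ext_of_adjoin_eq_top h fun y hy ↦ Ideal.Quotient.eq.2 <| by
      have hy' : B₀.val ((φ₀ ^ b) ⟨y, hy⟩) = (φ ^ b) y := apply_pow_of_semiconj hφ₀ b ⟨y, hy⟩
      rw [AlgHom.coe_toRingHom, ← hy']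
      exact hper ⟨y, hy⟩
  exact Ideal.Quotient.eq.1 (DFunLike.congr_fun hcomp a)

theorem HasDensePeriodicPoints.of_subalgebra [Algebra.IsAlgebraic k K] {B₀ : Subalgebra k B}
    (h : Algebra.adjoin K (B₀ : Set B) = ⊤) {φ : B →ₐ[K] B} {φ₀ : B₀ →ₐ[k] B₀}
    (hφ₀ : Function.Semiconj B₀.val φ₀ φ) (hdense : HasDensePeriodicPoints φ₀) {D : B}
    (hD : D ∈ B₀) (hne : ∀ n, (φ ^ n) D ≠ 0) :
    ∃ m, IsPeriodicMaximal φ m ∧ ∀ n, (φ ^ n) D ∉ m := by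
  have hval (n : ℕ) : B₀.val ((φ₀ ^ n) ⟨D, hD⟩) = (φ ^ n) D :=
    apply_pow_of_semiconj hφ₀ n ⟨D, hD⟩
  obtain ⟨m, hm, hDm⟩ := hdense ⟨D, hD⟩ fun n h0 ↦ hne n (by rw [← hval, h0, map_zero])
  obtain ⟨Q, hQ, rfl⟩ := hm.exists_comap_eq h hφ₀
  exact ⟨Q, hQ, fun n hn ↦ hDm n (Ideal.mem_comap.2 ((hval n).symm ▸ hn))⟩

end Descent

section FiniteType

variable {k A A' : Type*} [Field k] [CommRing A] [Algebra k A] [CommRing A'] [Algebra k A']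

theorem HasDensePeriodicPoints.of_surjective {φ : A →ₐ[k] A} {φ' : A' →ₐ[k] A'} {ρ : A →ₐ[k] A'}
    (hρ : Function.Surjective ρ) (hφ : Function.Semiconj ρ φ φ')
    (hker : ∀ D, ρ D = 0 → ∃ n, (φ ^ n) D = 0) (hdense : HasDensePeriodicPoints φ') :
    HasDensePeriodicPoints φ := by
  intro D hD
  have hval := apply_pow_of_semiconj hφ
  obtain ⟨m, ⟨hm, b, hb, hper⟩, hDm⟩ := hdense (ρ D) fun n hn ↦ by
    obtain ⟨l, hl⟩ := hker _ ((hval n D).trans hn)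
    exact hD (l + n) (by rw [pow_add, AlgHom.mul_apply, hl])
  refine ⟨m.comap ρ, ⟨Ideal.comap_isMaximal_of_surjective ρ hρ, b, hb, fun a ↦ ?_⟩, fun n ↦ ?_⟩
  · rw [Ideal.mem_comap, map_sub, hval]
    exact hper _
  · rw [Ideal.mem_comap, hval]
    exact hDm n

theorem exists_injective_of_isNoetherianRing [IsNoetherianRing A] (φ : A →ₐ[k] A) :
    ∃ (n : ℕ) (φ' : (φ ^ n).range →ₐ[k] (φ ^ n).range), Function.Injective φ' ∧
      Function.Semiconj (φ ^ n).rangeRestrict φ φ' := by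
  have hker : Monotone fun n ↦ RingHom.ker (φ ^ n) := monotone_nat_of_le_succ fun n a ha ↦ by
    rw [RingHom.mem_ker] at ha ⊢
    rw [pow_succ', AlgHom.mul_apply, ha, map_zero]
  obtain ⟨n, hn⟩ := monotone_stabilizes_iff_noetherian.2 ‹_› ⟨_, hker⟩
  have hcomm (a : A) : φ ((φ ^ n) a) = (φ ^ n) (φ a) := by
    rw [← AlgHom.mul_apply, ← AlgHom.mul_apply, pow_mul_comm']
  refine ⟨n, (φ.comp (φ ^ n).range.val).codRestrict _ ?_, ?_, fun a ↦ Subtype.ext (hcomm a).symm⟩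
  · rintro ⟨_, a, rfl⟩
    exact ⟨φ a, (hcomm a).symm⟩
  · refine (injective_iff_map_eq_zero _).2 ?_
    rintro ⟨_, a, rfl⟩ ha
    have hmem : a ∈ RingHom.ker (φ ^ (n + 1)) := by
      rw [RingHom.mem_ker, pow_succ', AlgHom.mul_apply]
      exact congrArg Subtype.val ha
    exact Subtype.ext ((hn (n + 1) n.le_succ).ge hmem)

variable {K B : Type*} [Field K] [CommRing B] [IsDomain B] [Algebra K B] [Algebra.FiniteType K B]

theorem hasDensePeriodicPoints_of_injective (p : ℕ) [Fact p.Prime] [Algebra (ZMod p) K]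
    [Algebra.IsAlgebraic (ZMod p) K] {φ : B →ₐ[K] B} (hφ : Function.Injective φ) :
    HasDensePeriodicPoints φ := by
  intro D hD
  let _ : Algebra (ZMod p) B := Algebra.compHom B (algebraMap (ZMod p) K)
  have : IsScalarTower (ZMod p) K B := .of_algebraMap_eq fun _ ↦ rfl
  obtain ⟨B₀, hfg, hDB₀, hmaps, htop⟩ := exists_fg_subalgebra_mapsTo (ZMod p) φ D
  have : Algebra.FiniteType (ZMod p) B₀ := B₀.fg_iff_finiteType.1 hfg
  let φ₀ : B₀ →ₐ[ZMod p] B₀ :=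
    ((φ.restrictScalars (ZMod p)).comp B₀.val).codRestrict B₀ fun y ↦ hmaps y.2
  have hφ₀ : Function.Injective φ₀ := fun y z h ↦ Subtype.ext (hφ (congrArg Subtype.val h))
  exact (hasDensePeriodicPoints_of_injective_zmod hφ₀).of_subalgebra htop (fun _ ↦ rfl) hDB₀ hD

theorem hasDensePeriodicPoints_of_finiteType (p : ℕ) [Fact p.Prime] [Algebra (ZMod p) K]
    [Algebra.IsAlgebraic (ZMod p) K] (φ : B →ₐ[K] B) : HasDensePeriodicPoints φ := by
  have : IsNoetherianRing B := Algebra.FiniteType.isNoetherianRing K B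
  obtain ⟨n, φ', hφ', hsemi⟩ := exists_injective_of_isNoetherianRing φ
  have : Algebra.FiniteType K (φ ^ n).range :=
    .of_surjective (φ ^ n).rangeRestrict (φ ^ n).rangeRestrict_surjective
  exact (hasDensePeriodicPoints_of_injective p hφ').of_surjective
    (φ ^ n).rangeRestrict_surjective hsemi fun D hD ↦ ⟨n, congrArg Subtype.val hD⟩

end FiniteType

section RegularLift

variable {K P L : Type*} [CommRing K] [CommRing P] [Algebra K P] [Field L] [Algebra K L]
  {B : Subalgebra K P}

/-- The elements of `P` that can be written with a denominator in `B` at which the point `β` of `B`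
does not vanish. No element of `B` needs to become invertible in `P`. -/
def regularSubalgebra (β : B →ₐ[K] L) : Subalgebra K P where
  carrier := {u | ∃ d w : B, β d ≠ 0 ∧ (w : P) = d * u}
  mul_mem' := by
    rintro u v ⟨d, w, hd, hw⟩ ⟨e, z, he, hz⟩
    exact ⟨d * e, w * z, by simp [hd, he], by push_cast; rw [hw, hz]; ring⟩
  add_mem' := by
    rintro u v ⟨d, w, hd, hw⟩ ⟨e, z, he, hz⟩
    exact ⟨d * e, w * e + z * d, by simp [hd, he], by push_cast; rw [hw, hz]; ring⟩
  algebraMap_mem' r := ⟨1, algebraMap K B r, by simp, by simp⟩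

variable {β : B →ₐ[K] L}

theorem exists_forall_map_mul_eq (u : regularSubalgebra β) :
    ∃ l, ∀ d w : B, (w : P) = d * u → β d * l = β w := by
  obtain ⟨e, z, he, hz⟩ := u.2
  refine ⟨β z / β e, fun d w hw ↦ ?_⟩
  rw [mul_div_assoc', div_eq_iff he, ← map_mul, ← map_mul]
  congr 1
  ext
  push_cast
  rw [hw, hz]
  ring

/-- The value at the point `β` of an element that is regular there. -/
noncomputable def regularLift (β : B →ₐ[K] L) : regularSubalgebra β →ₐ[K] L :=
  have spec (u : regularSubalgebra β) := (exists_forall_map_mul_eq u).choose_spec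
  AlgHom.ofLinearMap
    { toFun u := (exists_forall_map_mul_eq u).choose
      map_add' u v := by
        obtain ⟨d, w, hd, hw⟩ := u.2
        obtain ⟨e, z, he, hz⟩ := v.2
        refine mul_left_cancel₀ (mul_ne_zero hd he) ?_
        rw [← map_mul, spec (u + v) (d * e) (w * e + z * d) (by push_cast; rw [hw, hz]; ring),
          map_add, map_mul, map_mul, map_mul, ← spec u d w hw, ← spec v e z hz]
        ring
      map_smul' r u := by
        obtain ⟨d, w, hd, hw⟩ := u.2
        refine mul_left_cancel₀ hd ?_
        rw [spec (r • u) d (r • w) (by simp [hw]), RingHom.id_apply, mul_smul_comm, spec u d w hw,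
          map_smul] }
    (by have h := spec 1 1 1 (by simp); rwa [map_one, one_mul] at h)
    fun u v ↦ by
      obtain ⟨d, w, hd, hw⟩ := u.2
      obtain ⟨e, z, he, hz⟩ := v.2
      refine mul_left_cancel₀ (mul_ne_zero hd he) ?_
      refine (map_mul β d e ▸ spec (u * v) (d * e) (w * z) ?_).trans ?_
      · push_cast
        rw [hw, hz]
        ring
      · rw [map_mul, ← spec u d w hw, ← spec v e z hz]
        exact mul_mul_mul_comm ..

theorem map_mul_regularLift {d w : B} {u : regularSubalgebra β} (hw : (w : P) = d * u) :
    β d * regularLift β u = β w :=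
  (exists_forall_map_mul_eq u).choose_spec d w hw

theorem mem_regularSubalgebra_of_mul_mem {u v : P} (hu : u ∈ regularSubalgebra β)
    (h0 : regularLift β ⟨u, hu⟩ ≠ 0) (huv : u * v ∈ regularSubalgebra β) :
    v ∈ regularSubalgebra β := by
  obtain ⟨d, w, hd, hw⟩ := id hu
  obtain ⟨e, z, he, hz⟩ := huv
  refine ⟨e * w, d * z, ?_, by push_cast; rw [hw, hz]; ring⟩
  rw [map_mul, ← map_mul_regularLift (u := ⟨u, hu⟩) hw]
  exact mul_ne_zero he (mul_ne_zero hd h0)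

variable {χ : B →ₐ[K] B} {ψ : P →ₐ[K] P}

theorem coe_apply_eq_mul_of_semiconj (hχ : Function.Semiconj B.val χ ψ) {d w : B} {u : P}
    (hw : (w : P) = d * u) : (χ w : P) = χ d * ψ u := by
  rw [show (χ w : P) = ψ w from hχ w, hw, map_mul, show (χ d : P) = ψ d from hχ d]

theorem map_mem_regularSubalgebra (hχ : Function.Semiconj B.val χ ψ) {u : P}
    (hu : u ∈ regularSubalgebra (β.comp χ)) : ψ u ∈ regularSubalgebra β := by
  obtain ⟨d, w, hd, hw⟩ := hu
  exact ⟨χ d, χ w, hd, coe_apply_eq_mul_of_semiconj hχ hw⟩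

theorem regularLift_map (hχ : Function.Semiconj B.val χ ψ) {u : P}
    (hu : u ∈ regularSubalgebra (β.comp χ)) :
    regularLift β ⟨ψ u, map_mem_regularSubalgebra hχ hu⟩ = regularLift (β.comp χ) ⟨u, hu⟩ := by
  obtain ⟨d, w, hd, hw⟩ := id hu
  refine mul_left_cancel₀ hd (Eq.trans ?_ (map_mul_regularLift (u := ⟨u, hu⟩) hw).symm)
  exact map_mul_regularLift (u := ⟨ψ u, _⟩) (coe_apply_eq_mul_of_semiconj hχ hw)

theorem map_adjoin_le_regularSubalgebra {F : Type*} [CommRing F] [Algebra K F] {C : F →ₐ[K] P}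
    {g : Set F} {t : B} (hg : ∀ x ∈ g, (t : P) * C x ∈ B) (ht : β t ≠ 0) :
    (Algebra.adjoin K g).map C ≤ regularSubalgebra β := by
  rw [AlgHom.map_adjoin]
  refine Algebra.adjoin_le ?_
  rintro _ ⟨x, hx, rfl⟩
  exact ⟨t, ⟨_, hg x hx⟩, ht, rfl⟩

end RegularLift

section PartitionOfUnity

variable {K F P L : Type*} [CommRing K] [CommRing F] [Algebra K F] [CommRing P] [Algebra K P]
  [Field L] [Algebra K L]

/-- The self-map `φ` of `F` induces a morphism of the scheme covered by the charts
`Spec K[g i]`: near each point `q` of a chart, `φ` maps some `K[g j]` to regular functions.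
It suffices to ask this for the generators of `K[g j]`. -/
def IsRegularOnCharts {ι : Type*} (φ : F →ₐ[K] F) (g : ι → Finset F) : Prop :=
  ∀ i (q : Ideal (Algebra.adjoin K (g i : Set F))), q.IsPrime →
    ∃ j, ∀ x ∈ g j, ∃ v ∉ q, (v : F) * φ x ∈ Algebra.adjoin K (g i : Set F)

/-- The point of `Spec S` below a point `β` of `Spec B` at which the functions in `C(S)` are
regular. -/
noncomputable def chartPoint {B : Subalgebra K P} (β : B →ₐ[K] L) (C : F →ₐ[K] P)
    {S : Subalgebra K F} (hS : S.map C ≤ regularSubalgebra β) : S →ₐ[K] L :=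
  (regularLift β).comp ((C.comp S.val).codRestrict _ fun x ↦ hS ⟨x, x.2, rfl⟩)

theorem exists_common_denominator {B : Subalgebra K P} {β : B →ₐ[K] L} {s : Set P}
    (hs : s.Finite) (hreg : s ⊆ regularSubalgebra β) :
    ∃ d : B, β d ≠ 0 ∧ ∀ u ∈ s, (d : P) * u ∈ B := by
  have hreg (u : P) (hu : u ∈ s) : ∃ d w : B, β d ≠ 0 ∧ (w : P) = d * u := hreg hu
  choose! d w hd hw using hreg
  refine ⟨∏ u ∈ hs.toFinset, d u, ?_, fun u hu ↦ ?_⟩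
  · rw [map_prod]
    exact Finset.prod_ne_zero_iff.2 fun u hu ↦ hd u (hs.mem_toFinset.1 hu)
  · obtain ⟨e, he⟩ := Finset.dvd_prod_of_mem d (hs.mem_toFinset.2 hu)
    rw [he, mul_comm (d u), MulMemClass.coe_mul, mul_assoc, ← hw u hu]
    exact mul_mem e.2 (w u).2

theorem exists_pow_mul_apply_mem {B : Subalgebra K P} {C : F →ₐ[K] P} {g : Set F} {t : B}
    (hg : ∀ x ∈ g, (t : P) * C x ∈ B) {a : F} (ha : a ∈ Algebra.adjoin K g) :
    ∃ m, (t : P) ^ m * C a ∈ B := by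
  obtain ⟨m, hm⟩ := Algebra.pow_smul_mem_of_smul_subset_of_mem_adjoin (R := K) (t : P)
    (C '' g) B (by rintro _ ⟨_, ⟨x, hx, rfl⟩, rfl⟩; exact hg x hx)
    ((AlgHom.map_adjoin C g).le ⟨a, ha, rfl⟩) t.2
  exact ⟨m, hm m le_rfl⟩

variable {ι : Type*} [Fintype ι] {φ : F →ₐ[K] F} {g : ι → Finset F} {C : F →ₐ[K] P}
  {B : Subalgebra K P} {t : ι → B}

theorem exists_image_subset_regularSubalgebra (hφ : IsRegularOnCharts φ g) (hsum : ∑ i, t i = 1)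
    (hg : ∀ i, ∀ x ∈ g i, (t i : P) * C x ∈ B) (β : B →ₐ[K] L) :
    ∃ j, (fun x ↦ C (φ x)) '' (g j : Set F) ⊆ regularSubalgebra β := by
  obtain ⟨i, -, hi⟩ : ∃ i ∈ Finset.univ, β (t i) ≠ 0 := by
    refine Finset.exists_ne_zero_of_sum_ne_zero ?_
    rw [← map_sum, hsum, map_one]
    exact one_ne_zero
  have hS := map_adjoin_le_regularSubalgebra (hg i) hi
  obtain ⟨j, hj⟩ := hφ i (RingHom.ker (chartPoint β C hS)) (RingHom.ker_isPrime _)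
  refine ⟨j, ?_⟩
  rintro _ ⟨x, hx, rfl⟩
  obtain ⟨v, hv, hvx⟩ := hj x hx
  refine mem_regularSubalgebra_of_mul_mem (hS ⟨v, v.2, rfl⟩) hv ?_
  exact hS ⟨_, hvx, map_mul C _ _⟩

theorem exists_sum_eq_one_forall_mul_apply_mem (hφ : IsRegularOnCharts φ g)
    (hsum : ∑ i, t i = 1) (hg : ∀ i, ∀ x ∈ g i, (t i : P) * C x ∈ B) :
    ∃ t' : ι → B, ∑ i, t' i = 1 ∧ ∀ i, ∀ x ∈ g i, (t' i : P) * C (φ x) ∈ B := by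
  let 𝔞 (j : ι) : Ideal B := (1 : Submodule B P).colon ((fun x ↦ C (φ x)) '' (g j : Set F))
  have mem_𝔞 {j : ι} {d : B} : d ∈ 𝔞 j ↔ ∀ x ∈ g j, (d : P) * C (φ x) ∈ B := by
    simp [𝔞, Submodule.mem_colon, Submodule.mem_one, Subalgebra.smul_def]
  have htop : ⨆ j, 𝔞 j = ⊤ := by
    by_contra hne
    obtain ⟨𝔭, h𝔭, hle⟩ := Ideal.exists_le_maximal _ hne
    let _ := Ideal.Quotient.field 𝔭
    obtain ⟨j, hj⟩ := exists_image_subset_regularSubalgebra hφ hsum hg (Ideal.Quotient.mkₐ K 𝔭)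
    obtain ⟨d, hd, hdj⟩ := exists_common_denominator ((g j).finite_toSet.image _) hj
    refine hd (Ideal.Quotient.eq_zero_iff_mem.2 (hle (Ideal.mem_iSup_of_mem j (mem_𝔞.2 ?_))))
    exact fun x hx ↦ hdj _ ⟨x, hx, rfl⟩
  obtain ⟨t', ht', hsum'⟩ := (Submodule.mem_iSup_iff_exists_finsupp _ _).1
    (htop ▸ Submodule.mem_top : (1 : B) ∈ ⨆ j, 𝔞 j)
  exact ⟨t', by rw [← hsum', Finsupp.sum_fintype _ _ fun _ ↦ rfl], fun i ↦ mem_𝔞.1 (ht' i)⟩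

theorem exists_forall_pow_apply_ne_zero [Nontrivial P] {t : ι → P} (ψ : P →ₐ[K] P)
    (hsum : ∑ i, t i = 1) : ∃ i, ∀ n, (ψ ^ n) (t i) ≠ 0 := by
  by_contra! hvanish
  choose n hn using hvanish
  have hzero (i : ι) : (ψ ^ ∑ j, n j) (t i) = 0 := by
    have hle : n i ≤ ∑ j, n j := Finset.single_le_sum (fun _ _ ↦ Nat.zero_le _) (Finset.mem_univ i)
    rw [← Nat.sub_add_cancel hle, pow_add, AlgHom.mul_apply, hn, map_zero]
  refine zero_ne_one (α := P) ?_
  rw [← map_one (ψ ^ ∑ j, n j), ← hsum, map_sum, Finset.sum_eq_zero fun i _ ↦ hzero i]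

end PartitionOfUnity

section AffineTorsor

variable {K F : Type*} [CommRing K] [CommRing F] [Algebra K F] {ι : Type*} [Fintype ι]

theorem exists_universal_sum_eq_one [Nonempty ι] :
    ∃ t : ι → MvPolynomial ι F, ∑ i, t i = 1 ∧
      ∀ (φ : F →ₐ[K] F) (t' : ι → MvPolynomial ι F), ∑ i, t' i = 1 →
        ∃ ψ : MvPolynomial ι F →ₐ[K] MvPolynomial ι F,
          (∀ x, ψ (MvPolynomial.C x) = MvPolynomial.C (φ x)) ∧ ∀ i, ψ (t i) = t' i := by
  classical
  let i₀ : ι := Classical.arbitrary ι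
  let X : ι → MvPolynomial ι F := MvPolynomial.X
  refine ⟨fun i ↦ X i + Pi.single (M := fun _ ↦ MvPolynomial ι F) i₀ (1 - ∑ j, X j) i, ?_,
    fun φ t' hsum ↦ ?_⟩
  · simp [Finset.sum_add_distrib]
  · refine ⟨MvPolynomial.aevalTower ((IsScalarTower.toAlgHom K F _).comp φ) t', fun x ↦ ?_,
      fun i ↦ ?_⟩
    · exact MvPolynomial.aevalTower_C _ _ x
    · obtain rfl | hi := eq_or_ne i i₀
      · simp [X, hsum]
      · simp [X, hi]

/-- A finitely generated algebra `ring` with an endomorphism `endo` that restricts to `φ` on the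
charts: an affine-space bundle over the scheme covered by the charts `Spec K[g i]`, with a partition
of unity `weight` subordinate to them. It is realised inside `F[X_i]` so that `endo` can be compared
with `φ`, through the endomorphism `extension` of `F[X_i]`. -/
structure AffineModel (φ : F →ₐ[K] F) (g : ι → Finset F) where
  ring : Subalgebra K (MvPolynomial ι F)
  fg : ring.FG
  weight : ι → ring
  sum_weight : ∑ i, weight i = 1
  weight_mul_mem : ∀ i, ∀ x ∈ g i, (weight i : MvPolynomial ι F) * MvPolynomial.C x ∈ ring
  endo : ring →ₐ[K] ring
  extension : MvPolynomial ι F →ₐ[K] MvPolynomial ι F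
  extension_coe : Function.Semiconj ring.val endo extension
  extension_C : ∀ x, extension (MvPolynomial.C x) = MvPolynomial.C (φ x)

theorem IsRegularOnCharts.nonempty_affineModel [Nonempty ι] {φ : F →ₐ[K] F} {g : ι → Finset F}
    (hφ : IsRegularOnCharts φ g) : Nonempty (AffineModel φ g) := by
  classical
  obtain ⟨t, hsum, huniv⟩ := exists_universal_sum_eq_one (K := K) (F := F) (ι := ι)
  let C : F →ₐ[K] MvPolynomial ι F := IsScalarTower.toAlgHom K F _
  let s : Finset (MvPolynomial ι F) :=
    Finset.univ.image t ∪ Finset.univ.biUnion fun i ↦ (g i).image fun x ↦ t i * C x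
  have hs {y : MvPolynomial ι F} : y ∈ (s : Set (MvPolynomial ι F)) ↔
      (∃ i, t i = y) ∨ ∃ i, ∃ x ∈ g i, t i * C x = y := by simp [s]
  let B := Algebra.adjoin K (s : Set (MvPolynomial ι F))
  let t₀ (i : ι) : B := ⟨t i, Algebra.subset_adjoin (hs.2 (.inl ⟨i, rfl⟩))⟩
  have hsum₀ : ∑ i, t₀ i = 1 := Subtype.ext ((AddSubmonoidClass.coe_finsetSum _ _).trans hsum)
  have hg (i : ι) (x : F) (hx : x ∈ g i) : (t₀ i : MvPolynomial ι F) * C x ∈ B :=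
    Algebra.subset_adjoin (hs.2 (.inr ⟨i, x, hx, rfl⟩))
  obtain ⟨t', hsum', hg'⟩ := exists_sum_eq_one_forall_mul_apply_mem hφ hsum₀ hg
  obtain ⟨ψ, hψC, hψt⟩ := huniv φ (fun i ↦ t' i)
    ((AddSubmonoidClass.coe_finsetSum _ _).symm.trans (congrArg Subtype.val hsum'))
  have hmaps : B ≤ B.comap ψ := by
    refine Algebra.adjoin_le fun y hy ↦ ?_
    obtain ⟨i, rfl⟩ | ⟨i, x, hx, rfl⟩ := hs.1 hy
    · rw [SetLike.mem_coe, Subalgebra.mem_comap, hψt]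
      exact (t' i).2
    · rw [SetLike.mem_coe, Subalgebra.mem_comap, map_mul, hψt, show ψ (C x) = _ from hψC x]
      exact hg' i x hx
  exact ⟨B, ⟨s, rfl⟩, t₀, hsum₀, hg, (ψ.comp B.val).codRestrict B fun z ↦ hmaps z.2, ψ,
    fun _ ↦ rfl, hψC⟩

end AffineTorsor

section PeriodicOrbit

theorem HasDensePeriodicPoints.exists_algHom {K B : Type*} [Field K] [CommRing B] [Algebra K B]
    [Algebra.FiniteType K B] {χ : B →ₐ[K] B} (hχ : HasDensePeriodicPoints χ) {D : B}
    (hD : ∀ n, (χ ^ n) D ≠ 0) :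
    ∃ (β : B →ₐ[K] AlgebraicClosure K) (b : ℕ), 1 ≤ b ∧ β.comp (χ ^ b) = β ∧
      ∀ n, β ((χ ^ n) D) ≠ 0 := by
  obtain ⟨m, ⟨hm, b, hb, hper⟩, hDm⟩ := hχ D hD
  let _ := Ideal.Quotient.field m
  have : Module.Finite K (B ⧸ m) := finite_of_finite_type_of_isJacobsonRing K (B ⧸ m)
  let ι : B ⧸ m →ₐ[K] AlgebraicClosure K := IsAlgClosed.lift
  refine ⟨ι.comp (Ideal.Quotient.mkₐ K m), b, hb, AlgHom.ext fun a ↦ ?_, fun n ↦ ?_⟩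
  · exact congrArg ι (Ideal.Quotient.eq.2 (hper a))
  · exact (map_ne_zero ι).2 (Ideal.Quotient.eq_zero_iff_mem.not.2 (hDm n))

variable {K F L : Type*} [CommRing K] [Field F] [Algebra K F] [Field L] [Algebra K L]

/-- The points `γ n` of the chart `Spec S` satisfy `f (γ n) = γ (n + 1)` and `γ (n + b) = γ n`,
where `f` is the rational self-map of `Spec S` given by `φ`. -/
structure IsPeriodicOrbit (φ : F →ₐ[K] F) {S : Subalgebra K F} (b : ℕ) (γ : ℕ → (S →ₐ[K] L)) :
    Prop where
  periodic : γ.Periodic b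
  map_mul_map : ∀ n {v a u : S}, (v : F) * φ a = u → γ n v * γ (n + 1) a = γ n u

variable {ι : Type*} [Fintype ι] {φ : F →ₐ[K] F} {g : ι → Finset F}

theorem AffineModel.map_adjoin_le (M : AffineModel φ g) {i : ι} {β : M.ring →ₐ[K] L}
    (hβ : β (M.weight i) ≠ 0) :
    (Algebra.adjoin K (g i : Set F)).map (IsScalarTower.toAlgHom K F (MvPolynomial ι F)) ≤
      regularSubalgebra β :=
  map_adjoin_le_regularSubalgebra (M.weight_mul_mem i) hβ

theorem AffineModel.isPeriodicOrbit_chartPoint (M : AffineModel φ g) {i : ι} {b : ℕ}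
    {β : M.ring →ₐ[K] L} (hβb : β.comp (M.endo ^ b) = β)
    (hβ : ∀ n, β.comp (M.endo ^ n) (M.weight i) ≠ 0) :
    IsPeriodicOrbit φ b fun n ↦ chartPoint (β.comp (M.endo ^ n)) _ (M.map_adjoin_le (hβ n)) where
  periodic n := by
    have : β.comp (M.endo ^ (n + b)) = β.comp (M.endo ^ n) := by
      ext a
      rw [add_comm, pow_add]
      exact DFunLike.congr_fun hβb ((M.endo ^ n) a)
    simp only [this]
  map_mul_map n v a u hu := by
    let C := IsScalarTower.toAlgHom K F (MvPolynomial ι F)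
    have hC (x : Algebra.adjoin K (g i : Set F)) (n : ℕ) :
        C x ∈ regularSubalgebra (β.comp (M.endo ^ n)) := M.map_adjoin_le (hβ n) ⟨x, x.2, rfl⟩
    have hCa : C a ∈ regularSubalgebra ((β.comp (M.endo ^ n)).comp M.endo) := hC a (n + 1)
    have hval := regularLift_map M.extension_coe hCa
    change regularLift _ ⟨C v, hC v n⟩ * regularLift (_ : M.ring →ₐ[K] L) ⟨C a, hCa⟩ =
      regularLift _ ⟨C u, hC u n⟩
    rw [← hval, ← map_mul]
    congr 1
    ext1
    change C v * M.extension (C a) = C u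
    rw [← hu, map_mul]
    exact congrArg _ (M.extension_C _)

end PeriodicOrbit

section PeriodicOrbitOnCharts

variable {K F ι : Type*} [Field K] [Field F] [Algebra K F] {φ : F →ₐ[K] F} {g : ι → Finset F}

theorem AffineModel.exists_forall_endo_pow_apply_ne_zero [Fintype ι] (M : AffineModel φ g) :
    ∃ i, ∀ {s : F}, s ≠ 0 → ∀ {m : ℕ} {D : M.ring},
      (D : MvPolynomial ι F) = (M.weight i : MvPolynomial ι F) ^ m * MvPolynomial.C s →
        ∀ n, (M.endo ^ n) D ≠ 0 := by
  have hsum : ∑ i, (M.weight i : MvPolynomial ι F) = 1 :=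
    (AddSubmonoidClass.coe_finsetSum _ _).symm.trans (congrArg Subtype.val M.sum_weight)
  obtain ⟨i, hi⟩ := exists_forall_pow_apply_ne_zero M.extension hsum
  refine ⟨i, fun {s} hs {m D} hD n hn ↦ ?_⟩
  have hval := apply_pow_of_semiconj M.extension_coe n D
  have hC : Function.Semiconj MvPolynomial.C φ M.extension := fun x ↦ (M.extension_C x).symm
  rw [hn, map_zero, Subalgebra.coe_val, hD, map_mul, map_pow, ← apply_pow_of_semiconj hC] at hval
  have hCs : MvPolynomial.C (σ := ι) ((φ ^ n) s) ≠ 0 :=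
    (map_ne_zero_iff _ (MvPolynomial.C_injective ι F)).2 ((map_ne_zero (φ ^ n)).2 hs)
  exact mul_ne_zero (pow_ne_zero m (hi n)) hCs hval.symm

theorem IsRegularOnCharts.exists_isPeriodicOrbit [Finite ι] [Nonempty ι] (p : ℕ)
    [Fact p.Prime] [Algebra (ZMod p) K] [Algebra.IsAlgebraic (ZMod p) K]
    (hφ : IsRegularOnCharts φ g) :
    ∃ i, ∀ s : Algebra.adjoin K (g i : Set F), s ≠ 0 → ∃ b ≥ 1,
      ∃ γ : ℕ → (Algebra.adjoin K (g i : Set F) →ₐ[K] AlgebraicClosure K),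
        IsPeriodicOrbit φ b γ ∧ ∀ n, γ n s ≠ 0 := by
  cases nonempty_fintype ι
  obtain ⟨M⟩ := hφ.nonempty_affineModel
  have : Algebra.FiniteType K M.ring := M.ring.fg_iff_finiteType.1 M.fg
  let C := IsScalarTower.toAlgHom K F (MvPolynomial ι F)
  obtain ⟨i, hi⟩ := M.exists_forall_endo_pow_apply_ne_zero
  refine ⟨i, fun s hs ↦ ?_⟩
  obtain ⟨m, hm⟩ := exists_pow_mul_apply_mem (C := C) (M.weight_mul_mem i) s.2
  let D : M.ring := ⟨_, hm⟩
  obtain ⟨β, b, hb, hβb, hβ⟩ :=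
    (hasDensePeriodicPoints_of_finiteType p M.endo).exists_algHom (D := M.weight i * D)
      (hi (s := s) (by simpa using hs) (m := m + 1) (by rw [pow_succ', mul_assoc]; rfl))
  simp only [map_mul, mul_ne_zero_iff] at hβ
  refine ⟨b, hb, _, M.isPeriodicOrbit_chartPoint hβb fun n ↦ (hβ n).1, fun n hn ↦ ?_⟩
  have hDs : β.comp (M.endo ^ n) (M.weight i ^ m) * regularLift _ ⟨C s, _⟩ = _ :=
    map_mul_regularLift (w := D) (u := ⟨C s, M.map_adjoin_le (hβ n).1 ⟨s, s.2, rfl⟩⟩) rfl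
  exact (hβ n).2 (hDs.symm.trans ((congrArg _ hn).trans (mul_zero _)))

end PeriodicOrbitOnCharts

section GeometricPoint

variable {X Y : Scheme.{u}} {U : X.Opens} {L : Type u} [CommRing L]

/-- The `L`-point of `X` given by evaluating the functions on the affine open set `U`. -/
noncomputable def geometricPoint (hU : IsAffineOpen U) (α : Γ(X, U) →+* L) :
    Spec (.of L) ⟶ X :=
  Spec.map (CommRingCat.ofHom α) ≫ hU.fromSpec

theorem exists_map_pow_mul_appLE_eq (f : X ⟶ Y) (hU : IsAffineOpen U) {V : Y.Opens} {s : Γ(X, U)}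
    (e : X.basicOpen s ≤ f ⁻¹ᵁ V) (a : Γ(Y, V)) :
    ∃ (n : ℕ) (u : Γ(X, U)), X.presheaf.map (homOfLE (X.basicOpen_le s)).op (s ^ n) *
      f.appLE V (X.basicOpen s) e a = X.presheaf.map (homOfLE (X.basicOpen_le s)).op u := by
  have := hU.isLocalization_basicOpen s
  obtain ⟨n, u, hu⟩ := IsLocalization.Away.surj s (f.appLE V (X.basicOpen s) e a)
  exact ⟨n, u, by rw [map_pow, mul_comm]; exact hu⟩

theorem geometricPoint_comp (f : X ⟶ Y) (hU : IsAffineOpen U) {V : Y.Opens} (hV : IsAffineOpen V)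
    {s : Γ(X, U)} (e : X.basicOpen s ≤ f ⁻¹ᵁ V) {α : Γ(X, U) →+* L} {β : Γ(Y, V) →+* L}
    (hs : IsUnit (α s)) (hαβ : ∀ v a u, X.presheaf.map (homOfLE (X.basicOpen_le s)).op v *
      f.appLE V (X.basicOpen s) e a = X.presheaf.map (homOfLE (X.basicOpen_le s)).op u →
        α v * β a = α u) :
    geometricPoint hU α ≫ f = geometricPoint hV β := by
  have := hU.isLocalization_basicOpen s
  let α' : Γ(X, X.basicOpen s) →+* L := IsLocalization.Away.lift s hs
  have hα' (v : Γ(X, U)) : α' (X.presheaf.map (homOfLE (X.basicOpen_le s)).op v) = α v :=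
    IsLocalization.Away.lift_eq s hs v
  have hα : CommRingCat.ofHom α =
      X.presheaf.map (homOfLE (X.basicOpen_le s)).op ≫ CommRingCat.ofHom α' := by
    ext v
    exact (hα' v).symm
  have hβ : CommRingCat.ofHom β = f.appLE V (X.basicOpen s) e ≫ CommRingCat.ofHom α' := by
    ext a
    obtain ⟨n, u, hu⟩ := exists_map_pow_mul_appLE_eq f hU e a
    refine ((hs.pow n).mul_left_cancel ?_).symm
    have h := congrArg α' hu
    rw [map_mul, hα', hα', ← hαβ _ a u hu, map_pow] at h
    exact h
  rw [geometricPoint, geometricPoint, hα, hβ, Spec.map_comp, Spec.map_comp, Category.assoc,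
    Category.assoc, Category.assoc, hU.map_fromSpec_assoc (hU.basicOpen s),
    hV.SpecMap_appLE_fromSpec f (hU.basicOpen s) e]

theorem fromSpec_mem_basicOpen_iff (hU : IsAffineOpen U) {x : Spec Γ(X, U)} {s : Γ(X, U)} :
    hU.fromSpec x ∈ X.basicOpen s ↔ s ∉ x.asIdeal := by
  change x ∈ hU.fromSpec ⁻¹ᵁ X.basicOpen s ↔ _
  rw [hU.fromSpec_preimage_basicOpen]
  exact Iff.rfl

theorem geometricPoint_mem_basicOpen (hU : IsAffineOpen U) {α : Γ(X, U) →+* L} {s : Γ(X, U)}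
    (hs : IsUnit (α s)) (x : Spec (.of L)) : geometricPoint hU α x ∈ X.basicOpen s :=
  (fromSpec_mem_basicOpen_iff hU).2 fun h ↦ x.2.ne_top (Ideal.eq_top_of_isUnit_mem _ h hs)

theorem isClosed_singleton_geometricPoint [JacobsonSpace X] (hU : IsAffineOpen U)
    {α : Γ(X, U) →+* L} (hα : α.IsIntegral) {x : Spec (.of L)} (hx : x.asIdeal.IsMaximal) :
    IsClosed {geometricPoint hU α x} := by
  refine isClosed_singleton_of_isLocallyClosed_singleton ?_
  have hclosed : IsClosed {Spec.map (CommRingCat.ofHom α) x} :=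
    (PrimeSpectrum.isClosed_singleton_iff_isMaximal _).2
      (Ideal.isMaximal_comap_of_isIntegral_of_isMaximal' α hα x.asIdeal)
  have := hclosed.isLocallyClosed.image hU.fromSpec.isOpenEmbedding.isInducing
    hU.fromSpec.isOpenEmbedding.isOpen_range.isLocallyClosed
  rwa [Set.image_singleton] at this

end GeometricPoint

section FunctionField

variable {X Y : Scheme.{u}}

theorem map_genericPoint [IrreducibleSpace X] [IrreducibleSpace Y] (f : X ⟶ Y) [IsDominant f] :
    f (genericPoint X) = genericPoint Y := by
  refine ((genericPoint_spec Y).eq ?_).symm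
  have h := (genericPoint_spec X).image f.continuous
  rwa [Set.image_univ, f.denseRange.closure_eq] at h

theorem genericPoint_mem [IrreducibleSpace X] {U : X.Opens} {x : X} (hx : x ∈ U) :
    genericPoint X ∈ U :=
  (genericPoint_specializes x).mem_open U.2 hx

/-- The map of function fields induced by a dominant morphism. -/
noncomputable def functionFieldMap [IrreducibleSpace X] [IrreducibleSpace Y] (f : X ⟶ Y)
    [IsDominant f] : Y.functionField ⟶ X.functionField :=
  Y.presheaf.stalkSpecializes (specializes_of_eq (map_genericPoint f)) ≫ f.stalkMap _

theorem germ_functionFieldMap [IrreducibleSpace X] [IrreducibleSpace Y] (f : X ⟶ Y)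
    [IsDominant f] {U : X.Opens} {V : Y.Opens} (hU : genericPoint X ∈ U) (hV : genericPoint Y ∈ V)
    (e : U ≤ f ⁻¹ᵁ V) : Y.presheaf.germ V (genericPoint Y) hV ≫ functionFieldMap f =
      f.appLE V U e ≫ X.presheaf.germ U (genericPoint X) hU := by
  rw [functionFieldMap, TopCat.Presheaf.germ_stalkSpecializes_assoc, Scheme.Hom.germ_stalkMap,
    Scheme.Hom.appLE, Category.assoc, TopCat.Presheaf.germ_res]

end FunctionField

section OverField

variable (K : Type u) [CommRing K] {X Y : Scheme.{u}} [X.Over (Spec (.of K))]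
  [Y.Over (Spec (.of K))]

/-- The `K`-algebra structure on the functions on an open set of a scheme over `K`. -/
noncomputable local instance sectionsAlgebra (U : X.Opens) : Algebra K Γ(X, U) :=
  RingHom.toAlgebra <| ((X ↘ Spec (.of K)).appLE ⊤ U le_top).hom.comp
    (Scheme.ΓSpecIso (.of K)).inv.hom

theorem map_sections_algebraMap {U V : X.Opens} (i : U ⟶ V) (r : K) :
    X.presheaf.map i.op (algebraMap K Γ(X, V) r) = algebraMap K Γ(X, U) r :=
  congrArg (fun g ↦ g.hom ((Scheme.ΓSpecIso (.of K)).inv.hom r))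
    ((X ↘ Spec (.of K)).appLE_map (U := ⊤) le_top i.op)

theorem appLE_algebraMap (f : X ⟶ Y) [f.IsOver (Spec (.of K))] {U : X.Opens} {V : Y.Opens}
    (e : U ≤ f ⁻¹ᵁ V) (r : K) :
    f.appLE V U e (algebraMap K Γ(Y, V) r) = algebraMap K Γ(X, U) r := by
  have h := Scheme.Hom.appLE_comp_appLE f (Y ↘ Spec (.of K)) ⊤ V U le_top e
  simp only [comp_over] at h
  exact congrArg (fun g ↦ g.hom ((Scheme.ΓSpecIso (.of K)).inv.hom r)) h

theorem finiteType_sections [LocallyOfFiniteType (X ↘ Spec (.of K))] {U : X.Opens}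
    (hU : IsAffineOpen U) : Algebra.FiniteType K Γ(X, U) :=
  ((X ↘ Spec (.of K)).finiteType_appLE (isAffineOpen_top _) hU le_top).comp
    (.of_surjective _ (ConcreteCategory.bijective_of_isIso (Scheme.ΓSpecIso (.of K)).inv).2)

variable [IsIntegral X] [IsIntegral Y]

/-- The `K`-algebra structure on the function field of an integral scheme over `K`. -/
noncomputable local instance functionFieldAlgebra : Algebra K X.functionField :=
  RingHom.toAlgebra <|
    (X.presheaf.germ ⊤ (genericPoint X) trivial).hom.comp (algebraMap K Γ(X, ⊤))

/-- The inclusion of the functions on a nonempty open set into the function field. -/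
noncomputable def germAlgHom {U : X.Opens} (hU : genericPoint X ∈ U) :
    Γ(X, U) →ₐ[K] X.functionField where
  __ := (X.presheaf.germ U (genericPoint X) hU).hom
  commutes' r := by
    change X.presheaf.germ U _ hU _ = X.presheaf.germ ⊤ _ trivial _
    rw [← map_sections_algebraMap K (homOfLE le_top : U ⟶ ⊤),
      TopCat.Presheaf.germ_res_apply]

theorem germAlgHom_injective {U : X.Opens} (hU : genericPoint X ∈ U) :
    Function.Injective (germAlgHom K hU) :=
  germ_injective_of_isIntegral X _ hU

/-- The map of function fields induced by a dominant morphism over `K`. -/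
noncomputable def functionFieldAlgHom (f : X ⟶ Y) [IsDominant f] [f.IsOver (Spec (.of K))] :
    Y.functionField →ₐ[K] X.functionField where
  __ := (functionFieldMap f).hom
  commutes' r := by
    have h := congrArg (fun g ↦ g.hom (algebraMap K Γ(Y, ⊤) r))
      (germ_functionFieldMap f (U := ⊤) (V := ⊤) trivial trivial le_top)
    exact h.trans (congrArg _ (appLE_algebraMap K f le_top r))

theorem functionFieldAlgHom_germAlgHom (f : X ⟶ Y) [IsDominant f] [f.IsOver (Spec (.of K))]
    {U : X.Opens} {V : Y.Opens} (hU : genericPoint X ∈ U) (hV : genericPoint Y ∈ V)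
    (e : U ≤ f ⁻¹ᵁ V) (a : Γ(Y, V)) :
    functionFieldAlgHom K f (germAlgHom K hV a) = germAlgHom K hU (f.appLE V U e a) :=
  congrArg (fun g ↦ g.hom a) (germ_functionFieldMap f hU hV e)

theorem germAlgHom_map {U V : X.Opens} (hU : genericPoint X ∈ U) (i : U ⟶ V) (a : Γ(X, V)) :
    germAlgHom K hU (X.presheaf.map i.op a) = germAlgHom K (i.le hU) a :=
  TopCat.Presheaf.germ_res_apply _ i _ hU a

theorem germAlgHom_mul_functionFieldAlgHom_eq_iff (f : X ⟶ Y) [IsDominant f]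
    [f.IsOver (Spec (.of K))] {U : X.Opens} {V : Y.Opens} (hU : genericPoint X ∈ U)
    (hV : genericPoint Y ∈ V) {s : Γ(X, U)} (hs : genericPoint X ∈ X.basicOpen s)
    (e : X.basicOpen s ≤ f ⁻¹ᵁ V) {v u : Γ(X, U)} {a : Γ(Y, V)} :
    germAlgHom K hU v * functionFieldAlgHom K f (germAlgHom K hV a) = germAlgHom K hU u ↔
      X.presheaf.map (homOfLE (X.basicOpen_le s)).op v * f.appLE V (X.basicOpen s) e a =
        X.presheaf.map (homOfLE (X.basicOpen_le s)).op u := by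
  rw [functionFieldAlgHom_germAlgHom K f hs hV e, ← (germAlgHom_injective K hs).eq_iff, map_mul,
    germAlgHom_map, germAlgHom_map]

theorem IsPeriodicOrbit.geometricPoint_comp {L : Type u} [Field L] [Algebra K L] (f : X ⟶ X)
    [IsDominant f] [f.IsOver (Spec (.of K))] {U : X.Opens} (hU : IsAffineOpen U)
    (hη : genericPoint X ∈ U) {s : Γ(X, U)} (hs : genericPoint X ∈ X.basicOpen s)
    (e : X.basicOpen s ≤ f ⁻¹ᵁ U) {b : ℕ} {γ : ℕ → ((germAlgHom K hη).range →ₐ[K] L)}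
    (hγ : IsPeriodicOrbit (functionFieldAlgHom K f) b γ) {n : ℕ}
    (hγs : γ n ((germAlgHom K hη).rangeRestrict s) ≠ 0) :
    geometricPoint hU ((γ n).comp (germAlgHom K hη).rangeRestrict).toRingHom ≫ f =
      geometricPoint hU ((γ (n + 1)).comp (germAlgHom K hη).rangeRestrict).toRingHom :=
  _root_.geometricPoint_comp f hU hU e hγs.isUnit fun _ _ _ h ↦
    hγ.map_mul_map n ((germAlgHom_mul_functionFieldAlgHom_eq_iff K f hη hη hs e).2 h)

theorem exists_adjoin_eq_range_germAlgHom [LocallyOfFiniteType (X ↘ Spec (.of K))] {U : X.Opens}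
    (hU : IsAffineOpen U) (hη : genericPoint X ∈ U) :
    ∃ g : Finset X.functionField, Algebra.adjoin K (g : Set X.functionField) =
      (germAlgHom K hη).range := by
  have := finiteType_sections K hU
  exact (Subalgebra.fg_iff_finiteType _).2
    (.of_surjective (germAlgHom K hη).rangeRestrict (germAlgHom K hη).rangeRestrict_surjective)

theorem isRegularOnCharts_of_affineCover (f : X ⟶ X) [IsDominant f] [f.IsOver (Spec (.of K))]
    {ι : Type*} {U : ι → X.Opens} (hU : ∀ i, IsAffineOpen (U i)) (hcover : ∀ x, ∃ i, x ∈ U i)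
    (hη : ∀ i, genericPoint X ∈ U i) {g : ι → Finset X.functionField}
    (hg : ∀ i, Algebra.adjoin K (g i : Set X.functionField) = (germAlgHom K (hη i)).range) :
    IsRegularOnCharts (functionFieldAlgHom K f) g := by
  unfold IsRegularOnCharts
  intro i
  rw [hg i]
  intro q hq
  let x : Spec Γ(X, U i) :=
    ⟨q.comap (germAlgHom K (hη i)).rangeRestrict, hq.comap _⟩
  obtain ⟨j, hj⟩ := hcover (f ((hU i).fromSpec x))
  obtain ⟨s, hs, hxs⟩ := (hU i).exists_basicOpen_le (V := f ⁻¹ᵁ U j) ⟨_, hj⟩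
    ((hU i).range_fromSpec.le ⟨x, rfl⟩)
  refine ⟨j, fun y hy ↦ ?_⟩
  obtain ⟨a, rfl⟩ := (hg j).le (Algebra.subset_adjoin hy)
  obtain ⟨n, u, hu⟩ := exists_map_pow_mul_appLE_eq f (hU i) hs a
  refine ⟨(germAlgHom K (hη i)).rangeRestrict (s ^ n), fun h ↦ ?_, u, ?_⟩
  · exact (fromSpec_mem_basicOpen_iff (hU i)).1 hxs (x.2.mem_of_pow_mem n h)
  · exact ((germAlgHom_mul_functionFieldAlgHom_eq_iff K f (hη i) (hη j) (genericPoint_mem hxs)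
      hs).2 hu).symm

end OverField

theorem exists_finset_affineOpens_cover (X : Scheme.{u}) [IrreducibleSpace X] [CompactSpace X] :
    ∃ t : Finset X.affineOpens, (∀ U ∈ t, genericPoint X ∈ (U : X.Opens)) ∧
      ∀ x : X, ∃ U : t, x ∈ (U : X.affineOpens).1 := by
  classical
  obtain ⟨t, ht, htop⟩ :=
    (isCompact_iff_finite_and_eq_biUnion_affineOpens (U := (⊤ : X.Opens))).1 isCompact_univ
  refine ⟨{U ∈ ht.toFinset | genericPoint X ∈ (U : X.Opens)},
    fun U hU ↦ (Finset.mem_filter.1 hU).2, fun x ↦ ?_⟩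
  have hx : x ∈ ⨆ U ∈ t, (U : X.Opens) := htop ▸ trivial
  simp only [TopologicalSpace.Opens.mem_iSup] at hx
  obtain ⟨U, hU, hxU⟩ := hx
  exact ⟨⟨U, Finset.mem_filter.2 ⟨ht.mem_toFinset.2 hU, genericPoint_mem hxU⟩⟩, hxU⟩

section PeriodicPoints

variable {K : Type u} [Field K] {X : Scheme.{u}} [X.Over (Spec (.of K))] [IsIntegral X]
  [LocallyOfFiniteType (X ↘ Spec (.of K))]

attribute [local instance] sectionsAlgebra functionFieldAlgebra

theorem exists_isClosed_singleton_iterate_eq {f : X ⟶ X} [IsDominant f]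
    [f.IsOver (Spec (.of K))] {U : X.Opens} (hU : IsAffineOpen U) (hη : genericPoint X ∈ U)
    {s : Γ(X, U)} (hs : genericPoint X ∈ X.basicOpen s) (e : X.basicOpen s ≤ f ⁻¹ᵁ U) {b : ℕ}
    {γ : ℕ → ((germAlgHom K hη).range →ₐ[K] AlgebraicClosure K)}
    (hγ : IsPeriodicOrbit (functionFieldAlgHom K f) b γ)
    (hγs : ∀ n, γ n ((germAlgHom K hη).rangeRestrict s) ≠ 0) :
    ∃ x ∈ X.basicOpen s, IsClosed {x} ∧ f^[b] x = x := by
  have := LocallyOfFiniteType.jacobsonSpace (X ↘ Spec (.of K))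
  let P (n : ℕ) := geometricPoint hU ((γ n).comp (germAlgHom K hη).rangeRestrict).toRingHom
  have hP (n : ℕ) : P n ≫ f = P (n + 1) :=
    hγ.geometricPoint_comp K f hU hη hs e (hγs n)
  let x : Spec (.of (AlgebraicClosure K)) := (⊥ : PrimeSpectrum (AlgebraicClosure K))
  have hiter (n : ℕ) : f^[n] (P 0 x) = P n x := by
    induction n with
    | zero => rfl
    | succ n ih => rw [Function.iterate_succ_apply', ih, ← hP]; rfl
  refine ⟨P 0 x, geometricPoint_mem_basicOpen hU (hγs 0).isUnit x,
    isClosed_singleton_geometricPoint hU ?_ Ideal.bot_isMaximal, ?_⟩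
  · refine RingHom.IsIntegral.tower_top (algebraMap K Γ(X, U)) _ ?_
    have hint : (algebraMap K (AlgebraicClosure K)).IsIntegral :=
      fun r ↦ Algebra.IsIntegral.isIntegral (R := K) r
    exact ((γ 0).comp (germAlgHom K hη).rangeRestrict).comp_algebraMap.symm ▸ hint
  · rw [hiter]
    simp only [P, ← hγ.periodic 0, zero_add]

theorem dense_isClosed_singleton_iterate_eq {f : X ⟶ X} [IsDominant f]
    [f.IsOver (Spec (.of K))] {U : X.Opens} (hU : IsAffineOpen U) (hη : genericPoint X ∈ U)
    (h : ∀ s : (germAlgHom K hη).range, s ≠ 0 → ∃ b ≥ 1,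
      ∃ γ : ℕ → ((germAlgHom K hη).range →ₐ[K] AlgebraicClosure K),
        IsPeriodicOrbit (functionFieldAlgHom K f) b γ ∧ ∀ n, γ n s ≠ 0) :
    Dense {x : X | IsClosed {x} ∧ ∃ b, 1 ≤ b ∧ f^[b] x = x} := by
  refine dense_iff_inter_open.2 fun O hO ⟨y, hy⟩ ↦ ?_
  have hηf : f (genericPoint X) ∈ U := (map_genericPoint f).symm ▸ hη
  have hηO : genericPoint X ∈ (⟨O, hO⟩ ⊓ f ⁻¹ᵁ U : X.Opens) :=
    ⟨genericPoint_mem (U := ⟨O, hO⟩) hy, hηf⟩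
  obtain ⟨s, hsO, hs⟩ := hU.exists_basicOpen_le ⟨_, hηO⟩ hη
  have hs0 : (germAlgHom K hη).rangeRestrict s ≠ 0 := by
    refine fun h0 ↦ ?_
    have : s = 0 := germAlgHom_injective K hη ((congrArg Subtype.val h0).trans (map_zero _).symm)
    rw [this, Scheme.basicOpen_zero] at hs
    exact hs
  obtain ⟨b, hb, γ, hγ, hγs⟩ := h _ hs0
  obtain ⟨x, hxs, hx, hbx⟩ :=
    exists_isClosed_singleton_iterate_eq hU hη hs (hsO.trans inf_le_right) hγ hγs
  exact ⟨x, (hsO hxs).1, hx, b, hb, hbx⟩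

end PeriodicPoints

theorem dense_periodic_closed_points_of_dominant_self_map_general
    (p : ℕ) [Fact p.Prime] (K : Type u) [Field K] [Algebra (ZMod p) K]
    [Algebra.IsAlgebraic (ZMod p) K] (Y : Scheme.{u}) [IsIntegral Y]
    (struct : Y ⟶ Spec (CommRingCat.of K)) [LocallyOfFiniteType struct] [QuasiCompact struct]
    (f : Y ⟶ Y) (hover : f ≫ struct = struct) (hdom : Dense (Set.range f.base)) :
    Dense {y : Y | IsClosed ({y} : Set Y) ∧ ∃ b : ℕ, 1 ≤ b ∧ (⇑f.base)^[b] y = y} := by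
  have : CompactSpace Y := QuasiCompact.compactSpace_of_compactSpace struct
  let _ : Y.Over (Spec (.of K)) := ⟨struct⟩
  have : f.IsOver (Spec (.of K)) := ⟨hover⟩
  have : IsDominant f := ⟨hdom⟩
  have : LocallyOfFiniteType (Y ↘ Spec (.of K)) := ‹LocallyOfFiniteType struct›
  let _ := functionFieldAlgebra K (X := Y)
  obtain ⟨t, ht, hcover⟩ := exists_finset_affineOpens_cover Y
  have : Nonempty t := ⟨(hcover (genericPoint Y)).choose⟩
  have hU (U : t) : IsAffineOpen (U : Y.affineOpens).1 := (U : Y.affineOpens).2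
  have hη (U : t) : genericPoint Y ∈ (U : Y.affineOpens).1 := ht U U.2
  choose g hg using fun U ↦ exists_adjoin_eq_range_germAlgHom K (hU U) (hη U)
  obtain ⟨U, h⟩ :=
    (isRegularOnCharts_of_affineCover K f hU hcover hη hg).exists_isPeriodicOrbit p
  exact dense_isClosed_singleton_iterate_eq (hU U) (hη U) (hg U ▸ h)

/-- Let `K` be an algebraic closure of `𝔽_p`, let `Y` be an integral scheme
of finite type over `K` (structure morphism `struct : Y ⟶ Spec K`, locally of finite type and
quasi-compact), and let `f : Y ⟶ Y` be a dominant morphism of schemes over `K`.  Then the set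
of `f`-periodic closed points `{y : y closed, f^b(y) = y for some b ≥ 1}` is dense in `Y`. -/
theorem dense_periodic_closed_points_of_dominant_self_map
    (p : ℕ) [Fact p.Prime] (K : Type) [Field K]
    [Algebra (ZMod p) K] [IsAlgClosure (ZMod p) K]
    (Y : Scheme) [IsIntegral Y]
    (struct : Y ⟶ Spec (CommRingCat.of K))
    [LocallyOfFiniteType struct] [QuasiCompact struct]
    (f : Y ⟶ Y) (hover : f ≫ struct = struct)
    (hdom : Dense (Set.range f.base)) :
    Dense {y : Y | IsClosed ({y} : Set Y) ∧ ∃ b : ℕ, 1 ≤ b ∧ (⇑f.base)^[b] y = y} :=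
  have := IsAlgClosure.isAlgebraic (R := ZMod p) (K := K)
  dense_periodic_closed_points_of_dominant_self_map_general p K Y struct f hover hdom
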